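/- arXiv:2101.04986 — 3 statements merged into one kernel-verified Lean document; each statement's English description precedes it below -/
import Mathlib

section
/- Let X₁, X₂ be Polish metric spaces, C : X₁ × 𝒫(X₂) → (−∞,+∞] lower semi-continuous, bounded from below, with C(x₁,·) convex for every x₁, let F₁, F₂ be admissible entropy functions, and let μ₁ ∈ ℳ(X₁), μ₂ ∈ ℳ(X₂) be such that the weak optimal entropy transport problem is feasible. Assume either (i) F₁ and F₂ are superlinear, i.e. (F₁)'_∞ = (F₂)'_∞ = +∞, or (ii) X₁ and X₂ are compact and (F₁)'_∞ + (F₂)'_∞ + inf C > 0. Then the infimum ℰ_C(μ₁,μ₂) = inf_{γ∈ℳ(X₁×X₂)} ℰ_C(γ|μ₁,μ₂) is attained by some γ̄ ∈ ℳ(X₁×X₂). -/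
open MeasureTheory Filter Set Topology
open scoped ENNReal NNReal BoundedContinuousFunction

noncomputable section

/-- The "positive part" of an extended real number, as an element of `ℝ≥0∞`. -/
def posE (a : EReal) : ℝ≥0∞ := if a = ⊤ then ⊤ else ENNReal.ofReal a.toReal

/-- Integral of an `EReal`-valued function: positive part minus negative part
(in `EReal`, so that it is always defined). -/
def eIntegral {α : Type*} [MeasurableSpace α] (μ : Measure α) (f : α → EReal) : EReal :=
  ((∫⁻ x, posE (f x) ∂μ : ℝ≥0∞) : EReal) - ((∫⁻ x, posE (-(f x)) ∂μ : ℝ≥0∞) : EReal)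

/-- The recession constant `lim_{s→∞} G(s)/s` (as a `limsup`, which coincides with the
limit for convex functions). -/
def recessionOf (G : ℝ → ℝ≥0∞) : ℝ≥0∞ :=
  Filter.limsup (fun s : ℝ => G s / ENNReal.ofReal s) Filter.atTop

/-- An admissible entropy function: a convex, lower semicontinuous function
`F : [0,∞) → [0,∞]` which is finite at some positive point. -/
structure EntropyFn where
  F : ℝ → ℝ≥0∞
  convex' : ∀ a ∈ Ici (0:ℝ), ∀ b ∈ Ici (0:ℝ), ∀ t : ℝ, 0 ≤ t → t ≤ 1 →
    F (t * a + (1 - t) * b) ≤ ENNReal.ofReal t * F a + ENNReal.ofReal (1 - t) * F b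
  lsc : LowerSemicontinuousOn F (Ici (0:ℝ))
  dom : ∃ s : ℝ, 0 < s ∧ F s ≠ ∞

namespace EntropyFn

/-- The recession constant `F'_∞ = lim_{s→∞} F(s)/s`. -/
def recC (F : EntropyFn) : ℝ≥0∞ := recessionOf F.F

/-- `F` is superlinear if `F'_∞ = ∞`. -/
def Superlinear (F : EntropyFn) : Prop := F.recC = ∞

/-- `F°(φ) := inf_{s ≥ 0} (φ·s + F(s))`, extended to `EReal` arguments. -/
def circ (F : EntropyFn) (φ : EReal) : EReal :=
  ⨅ s : Ici (0:ℝ), φ * ((s : ℝ) : EReal) + ((F.F (s : ℝ) : ℝ≥0∞) : EReal)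

/-- The (interior of the) domain of `F°` is taken inside the set where `F°` is not `-∞`. -/
def circDom (F : EntropyFn) : Set ℝ := {φ : ℝ | F.circ (φ : EReal) ≠ ⊥}

/-- The reverse entropy function `R(r) = r·F(1/r)` for `r > 0`, with `R(0) = F'_∞`. -/
def revF (F : EntropyFn) (r : ℝ) : ℝ≥0∞ :=
  if 0 < r then ENNReal.ofReal r * F.F (1 / r) else F.recC

/-- The Legendre conjugate `R*(ψ) = sup_{s ≥ 0} (s·ψ − R(s))` of the reverse function. -/
def revConj (F : EntropyFn) (ψ : ℝ) : EReal :=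
  ⨆ s : Ici (0:ℝ), (((s : ℝ) * ψ : ℝ) : EReal) - ((F.revF (s : ℝ) : ℝ≥0∞) : EReal)

end EntropyFn

/-- The entropy functional `ℱ(γ|μ) = ∫ F(dγ/dμ) dμ + F'_∞ · γ^⊥(X)`, where
`γ = (dγ/dμ)·μ + γ^⊥` is the Lebesgue decomposition of `γ` with respect to `μ`. -/
def entF {X : Type*} [MeasurableSpace X] (F : EntropyFn) (γ μ : Measure X) : ℝ≥0∞ :=
  (∫⁻ x, F.F ((γ.rnDeriv μ x).toReal) ∂μ) + F.recC * (γ.singularPart μ) Set.univ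

/-- The reverse entropy functional `ℛ(μ|γ) = ∫ R(dμ/dγ) dγ + R'_∞ · μ^⊥(X)`. -/
def revEntF {X : Type*} [MeasurableSpace X] (F : EntropyFn) (μ γ : Measure X) : ℝ≥0∞ :=
  (∫⁻ x, F.revF ((μ.rnDeriv γ x).toReal) ∂γ) + recessionOf F.revF * (μ.singularPart γ) Set.univ

section WOET

variable {X₁ X₂ : Type*} [MeasurableSpace X₁] [MeasurableSpace X₂]

/-- The weak entropy-transport cost
`ℰ_C(γ|μ₁,μ₂) = ℱ₁(γ₁|μ₁) + ℱ₂(γ₂|μ₂) + ∫ C(x₁, γ_{x₁}) dγ₁(x₁)`. -/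
def wCost [StandardBorelSpace X₂] [Nonempty X₂]
    (C : X₁ → ProbabilityMeasure X₂ → EReal) (F₁ F₂ : EntropyFn)
    (μ₁ : Measure X₁) (μ₂ : Measure X₂)
    (γ : Measure (X₁ × X₂)) (hγ : IsFiniteMeasure γ) : EReal :=
  haveI := hγ
  ((entF F₁ γ.fst μ₁ : ℝ≥0∞) : EReal) + ((entF F₂ γ.snd μ₂ : ℝ≥0∞) : EReal) +
    eIntegral γ.fst (fun x₁ => C x₁ ⟨γ.condKernel x₁, inferInstance⟩)

/-- The weak optimal entropy-transport value `ℰ_C(μ₁,μ₂)`. -/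
def wOpt [StandardBorelSpace X₂] [Nonempty X₂]
    (C : X₁ → ProbabilityMeasure X₂ → EReal) (F₁ F₂ : EntropyFn)
    (μ₁ : Measure X₁) (μ₂ : Measure X₂) : EReal :=
  sInf { e : EReal | ∃ (γ : Measure (X₁ × X₂)) (hγ : IsFiniteMeasure γ),
    e = wCost C F₁ F₂ μ₁ μ₂ γ hγ }

variable [TopologicalSpace X₁] [TopologicalSpace X₂]

/-- The dual feasible set `Λ`. -/
def lamSet (C : X₁ → ProbabilityMeasure X₂ → EReal) (F₁ F₂ : EntropyFn) :
    Set ((X₁ →ᵇ ℝ) × (X₂ →ᵇ ℝ)) :=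
  { φ | (∀ x, φ.1 x ∈ interior F₁.circDom) ∧ (∀ x, φ.2 x ∈ interior F₂.circDom) ∧
      ∀ (x₁ : X₁) (p : ProbabilityMeasure X₂),
        ((φ.1 x₁ + ∫ x₂, φ.2 x₂ ∂(p : Measure X₂) : ℝ) : EReal) ≤ C x₁ p }

/-- The dual feasible set `Λ_R`. -/
def lamRSet (C : X₁ → ProbabilityMeasure X₂ → EReal) (F₁ F₂ : EntropyFn) :
    Set ((X₁ →ᵇ ℝ) × (X₂ →ᵇ ℝ)) :=
  { φ | (∃ b : ℝ, ((b : ℝ) : EReal) < ((F₁.F 0 : ℝ≥0∞) : EReal) ∧ ∀ x, φ.1 x ≤ b) ∧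
        (∃ b : ℝ, ((b : ℝ) : EReal) < ((F₂.F 0 : ℝ≥0∞) : EReal) ∧ ∀ x, φ.2 x ≤ b) ∧
        ∀ (x₁ : X₁) (p : ProbabilityMeasure X₂),
          F₁.revConj (φ.1 x₁) + eIntegral (p : Measure X₂) (fun x₂ => F₂.revConj (φ.2 x₂))
            ≤ C x₁ p }

/-- The dual feasible set `Λ_ET` (constraints tested against all pairs of nonnegative finite
measures; on all other signed measures `ET = +∞`, so those constraints are vacuous). -/
def lamETSet [StandardBorelSpace X₂] [Nonempty X₂]
    (C : X₁ → ProbabilityMeasure X₂ → EReal) (F₁ F₂ : EntropyFn) :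
    Set ((X₁ →ᵇ ℝ) × (X₂ →ᵇ ℝ)) :=
  { φ | ∀ (μ₁ : Measure X₁) (μ₂ : Measure X₂), IsFiniteMeasure μ₁ → IsFiniteMeasure μ₂ →
      (((∫ x, φ.1 x ∂μ₁) + ∫ x, φ.2 x ∂μ₂ : ℝ) : EReal) ≤ wOpt C F₁ F₂ μ₁ μ₂ }

/-- The set `Λ_ET^<`. -/
def lamETltSet [StandardBorelSpace X₂] [Nonempty X₂]
    (C : X₁ → ProbabilityMeasure X₂ → EReal) (F₁ F₂ : EntropyFn) :
    Set ((X₁ →ᵇ ℝ) × (X₂ →ᵇ ℝ)) :=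
  { φ ∈ lamETSet C F₁ F₂ |
      (∃ b : ℝ, ((b : ℝ) : EReal) < ((F₁.F 0 : ℝ≥0∞) : EReal) ∧ ∀ x, φ.1 x ≤ b) ∧
      (∃ b : ℝ, ((b : ℝ) : EReal) < ((F₂.F 0 : ℝ≥0∞) : EReal) ∧ ∀ x, φ.2 x ≤ b) }

/-- `R_C φ(x₁) := inf_{p ∈ 𝒫(X₂)} (C(x₁,p) + ∫ φ dp)`. -/
def RCfun (C : X₁ → ProbabilityMeasure X₂ → EReal) (φ : X₂ →ᵇ ℝ) (x₁ : X₁) : EReal :=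
  ⨅ p : ProbabilityMeasure X₂, C x₁ p + ((∫ x₂, φ x₂ ∂(p : Measure X₂) : ℝ) : EReal)

/-- Property (BM) of an admissible entropy function on a space `X`. -/
def HasBM (X : Type*) [TopologicalSpace X] [MeasurableSpace X] (F : EntropyFn) : Prop :=
  ∀ ψ : X →ᵇ ℝ, (∃ b : ℝ, ((b : ℝ) : EReal) < ((F.F 0 : ℝ≥0∞) : EReal) ∧ ∀ x, ψ x ≤ b) →
    ∃ s : X → ℝ, Measurable s ∧ (∃ M : ℝ, ∀ x, |s x| ≤ M) ∧ (∀ x, 0 < s x) ∧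
      ∀ x, ((F.revF (s x) : ℝ≥0∞) : EReal) + F.revConj (ψ x) = ((s x * ψ x : ℝ) : EReal)

end WOET

/-- The functional `ET` extended to pairs of finite signed measures:
it equals `ℰ_C(μ₁,μ₂)` when both arguments are (induced by) nonnegative finite measures,
and `+∞` otherwise. -/
def ETsgn {X₁ X₂ : Type*} [MeasurableSpace X₁] [MeasurableSpace X₂]
    [StandardBorelSpace X₂] [Nonempty X₂]
    (C : X₁ → ProbabilityMeasure X₂ → EReal) (F₁ F₂ : EntropyFn)
    (ν₁ : SignedMeasure X₁) (ν₂ : SignedMeasure X₂) : EReal :=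
  sInf { e : EReal | ∃ (μ₁ : Measure X₁) (h₁ : IsFiniteMeasure μ₁)
      (μ₂ : Measure X₂) (h₂ : IsFiniteMeasure μ₂),
      ν₁ = @Measure.toSignedMeasure X₁ _ μ₁ h₁ ∧ ν₂ = @Measure.toSignedMeasure X₂ _ μ₂ h₂ ∧
      e = wOpt C F₁ F₂ μ₁ μ₂ }

section Martingale

variable {X : Set ℝ}

/-- The martingale condition for a finite measure on `X × X`:
`∫ y dγ_x(y) = x` for `γ₁`-a.e. `x`. -/
def martCond [StandardBorelSpace ↥X] [Nonempty ↥X]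
    (γ : Measure (↥X × ↥X)) (hγ : IsFiniteMeasure γ) : Prop :=
  haveI := hγ
  ∀ᵐ x ∂γ.fst, (∫ y, (y : ℝ) ∂(γ.condKernel x)) = (x : ℝ)

/-- The martingale optimal entropy transport value `ℰ_M(μ₁,μ₂)` (with an `EReal`-valued
cost `c`). -/
def eMart [StandardBorelSpace ↥X] [Nonempty ↥X]
    (c : ↥X → ↥X → EReal) (F₁ F₂ : EntropyFn) (μ₁ μ₂ : Measure ↥X) : EReal :=
  sInf { e : EReal | ∃ (γ : Measure (↥X × ↥X)) (hγ : IsFiniteMeasure γ), martCond γ hγ ∧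
    e = ((entF F₁ γ.fst μ₁ : ℝ≥0∞) : EReal) + ((entF F₂ γ.snd μ₂ : ℝ≥0∞) : EReal) +
        eIntegral γ (fun q => c q.1 q.2) }

/-- The martingale optimal entropy transport value `ℰ_M(μ₁,μ₂)` (with a `[0,∞]`-valued
cost `c`). -/
def eMartNN [StandardBorelSpace ↥X] [Nonempty ↥X]
    (c : ↥X → ↥X → ℝ≥0∞) (F₁ F₂ : EntropyFn) (μ₁ μ₂ : Measure ↥X) : EReal :=
  sInf { e : EReal | ∃ (γ : Measure (↥X × ↥X)) (hγ : IsFiniteMeasure γ), martCond γ hγ ∧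
    e = ((entF F₁ γ.fst μ₁ + entF F₂ γ.snd μ₂ + ∫⁻ q, c q.1 q.2 ∂γ : ℝ≥0∞) : EReal) }

/-- The dual feasible set `Λ_M` for the martingale problem. -/
def lamM (c : ↥X → ↥X → EReal) (F₁ F₂ : EntropyFn) : Set ((↥X →ᵇ ℝ) × (↥X →ᵇ ℝ)) :=
  { φ | (∀ x, φ.1 x ∈ interior F₁.circDom) ∧ (∀ x, φ.2 x ∈ interior F₂.circDom) ∧
      ∃ h : ↥X →ᵇ ℝ, ∀ x₁ x₂ : ↥X,
        ((φ.1 x₁ + φ.2 x₂ + h x₁ * ((x₂ : ℝ) - (x₁ : ℝ)) : ℝ) : EReal) ≤ c x₁ x₂ }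

/-- The perspective function `r·F(θ/r)` with the convention `r·F(θ/r) = θ·F'_∞` for `r = 0`. -/
def perspFn (F : EntropyFn) (r θ : ℝ) : ℝ≥0∞ :=
  if r = 0 then ENNReal.ofReal θ * F.recC else ENNReal.ofReal r * F.F (θ / r)

/-- The homogeneous marginal perspective cost `H(x₁,r₁;x₂,r₂)` (the dependence on
`(x₁,x₂)` is through the value `c = c(x₁,x₂)`). -/
def Hcost (F₁ F₂ : EntropyFn) (c : ℝ≥0∞) (r₁ r₂ : ℝ) : ℝ≥0∞ :=
  if c ≠ ∞ then
    ⨅ θ : Ioi (0:ℝ), perspFn F₁ r₁ (θ : ℝ) + perspFn F₂ r₂ (θ : ℝ) + ENNReal.ofReal (θ : ℝ) * c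
  else F₁.F 0 * ENNReal.ofReal r₁ + F₂.F 0 * ENNReal.ofReal r₂

/-- The functional `ℋ(μ₁,μ₂|γ)`. -/
def hMargFun (F₁ F₂ : EntropyFn) (c : ↥X → ↥X → ℝ≥0∞) (μ₁ μ₂ : Measure ↥X)
    (γ : Measure (↥X × ↥X)) : ℝ≥0∞ :=
  (∫⁻ q, Hcost F₁ F₂ (c q.1 q.2) ((μ₁.rnDeriv γ.fst q.1).toReal)
      ((μ₂.rnDeriv γ.snd q.2).toReal) ∂γ)
    + F₁.F 0 * (μ₁.singularPart γ.fst) Set.univ + F₂.F 0 * (μ₂.singularPart γ.snd) Set.univ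

/-- The functional `ℛ(μ₁,μ₂|γ)`. -/
def rMargFun (F₁ F₂ : EntropyFn) (c : ↥X → ↥X → ℝ≥0∞) (μ₁ μ₂ : Measure ↥X)
    (γ : Measure (↥X × ↥X)) : ℝ≥0∞ :=
  revEntF F₁ μ₁ γ.fst + revEntF F₂ μ₂ γ.snd + ∫⁻ q, c q.1 q.2 ∂γ

/-- The first `p`-homogeneous marginal of a measure on `Y × Y`, `Y = X × [0,∞)`. -/
def hMarg1 (p : ℝ) (α : Measure ((↥X × ℝ≥0) × (↥X × ℝ≥0))) : Measure ↥X :=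
  Measure.map (fun q => q.1.1) (α.withDensity fun q => (q.1.2 : ℝ≥0∞) ^ p)

/-- The second `p`-homogeneous marginal of a measure on `Y × Y`, `Y = X × [0,∞)`. -/
def hMarg2 (p : ℝ) (α : Measure ((↥X × ℝ≥0) × (↥X × ℝ≥0))) : Measure ↥X :=
  Measure.map (fun q => q.2.1) (α.withDensity fun q => (q.2.2 : ℝ≥0∞) ^ p)

/-- Membership in the homogeneous constraint set `ℋ^p_{M,≤}(μ₁,μ₂)`. -/
def memHpM (p : ℝ) (μ₁ μ₂ : Measure ↥X) (α : Measure ((↥X × ℝ≥0) × (↥X × ℝ≥0))) : Prop :=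
  IsFiniteMeasure α ∧ (∫⁻ q, (q.1.2 : ℝ≥0∞) ^ p + (q.2.2 : ℝ≥0∞) ^ p ∂α) ≠ ∞ ∧
    hMarg1 p α ≤ μ₁ ∧ hMarg2 p α ≤ μ₂ ∧
    ∀ h : ↥X →ᵇ ℝ, (∫ q, h q.1.1 * ((q.2.1 : ℝ) - (q.1.1 : ℝ)) ∂α) = 0

end Martingale

lemma hb_lemma {V : Type*} [NormedAddCommGroup V] [NormedSpace ℝ V] (A : Set (V × ℝ))
    (hA : Convex ℝ A) (v₀ : V) (η r K : ℝ) (hη : 0 < η)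
    (hK : ∀ a ∈ A, K ≤ a.2)
    (hdis : ∀ a ∈ A, ‖a.1 - v₀‖ < η → r ≤ a.2) :
    ∀ r' < r, ∃ (l : V →L[ℝ] ℝ) (b : ℝ), (∀ a ∈ A, l a.1 + b ≤ a.2) ∧ r' ≤ l v₀ + b := by
  intro r' hr'
  have hO : IsOpen (Metric.ball v₀ η ×ˢ Iio r) := Metric.isOpen_ball.prod isOpen_Iio
  have hOc : Convex ℝ (Metric.ball v₀ η ×ˢ Iio r) := (convex_ball _ _).prod (convex_Iio _)
  obtain ⟨f, u, h1, h2⟩ := geometric_hahn_banach_open hOc hO hA (by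
    rw [Set.disjoint_left]
    rintro ⟨v, s⟩ ⟨hv, hs⟩ ha
    have := hdis _ ha (by simpa [dist_eq_norm] using hv)
    simp at hs this
    linarith)
  have hdec : ∀ v s, f (v, s) = f (v, 0) + s * f (0, 1) := by
    intro v s
    have : ((v, s) : V × ℝ) = (v, 0) + s • (0, 1) := by simp
    rw [this, map_add, map_smul]; simp
  set α := f (0, 1) with hα
  set l : V →L[ℝ] ℝ := f.comp (ContinuousLinearMap.inl ℝ V ℝ) with hl
  have hlv : ∀ v, f (v, 0) = l v := by intro v; simp [hl]
  have h1' : ∀ s < r, l v₀ + s * α < u := by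
    intro s hs
    have := h1 (v₀, s) ⟨by simpa using hη, hs⟩
    rwa [hdec, hlv] at this
  have h2' : ∀ a ∈ A, u ≤ l a.1 + a.2 * α := by
    intro a ha
    have := h2 a ha
    rwa [← Prod.mk.eta (p := a), hdec, hlv] at this
  have hα0 : 0 ≤ α := by
    by_contra hneg
    push Not at hneg
    have := h1' (min (r - 1) ((u - l v₀) / α)) (lt_of_le_of_lt (min_le_left _ _) (by linarith))
    have h3 : min (r - 1) ((u - l v₀) / α) * α ≥ (u - l v₀) / α * α :=
      mul_le_mul_of_nonpos_right (min_le_right _ _) hneg.le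
    rw [div_mul_cancel₀ _ hneg.ne] at h3
    linarith
  rcases hα0.eq_or_lt with h0 | hpos
  · have hh : 0 < u - l v₀ := by have := h1' (r - 1) (by linarith); rw [← h0] at this; linarith
    set t := max 0 ((r' - K) / (u - l v₀)) with ht
    refine ⟨-(t • l), K + t * u, ?_, ?_⟩
    · intro a ha
      have h3 := h2' a ha
      have h4 := hK a ha
      rw [← h0] at h3
      have : t * (u - l a.1) ≤ 0 := mul_nonpos_of_nonneg_of_nonpos (le_max_left _ _) (by linarith)
      simp
      nlinarith
    · have : (r' - K) / (u - l v₀) * (u - l v₀) ≤ t * (u - l v₀) :=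
        mul_le_mul_of_nonneg_right (le_max_right _ _) hh.le
      rw [div_mul_cancel₀ _ hh.ne'] at this
      simp
      nlinarith
  · refine ⟨-(α⁻¹ • l), u / α, ?_, ?_⟩
    · intro a ha
      have h3 := h2' a ha
      have : (u - l a.1) / α ≤ a.2 := by rw [div_le_iff₀ hpos]; linarith
      simp
      have e : (u - l a.1) / α = -(α⁻¹ * l a.1) + u / α := by field_simp; ring
      linarith
    · have : r' ≤ (u - l v₀) / α := by rw [le_div_iff₀ hpos]; linarith [h1' r' hr']
      have e : (u - l v₀) / α = -(α⁻¹ * l v₀) + u / α := by field_simp; ring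
      simp
      linarith

lemma mix_approx {X : Type*} [MetricSpace X] [MeasurableSpace X] [BorelSpace X]
    (lam : Measure X) [IsFiniteMeasure lam] (g₁ g₂ : X → ℝ) (m₁ : Measurable g₁)
    (m₂ : Measurable g₂) (i₁ : Integrable g₁ lam) (i₂ : Integrable g₂ lam) (ε : ℝ) (hε : 0 < ε) :
    ∃ η : X → ℝ, Continuous η ∧ (∀ x, 0 ≤ η x ∧ η x ≤ 1) ∧
      ∫ x, |η x * g₁ x + (1 - η x) * g₂ x - max (g₁ x) (g₂ x)| ∂lam ≤ ε := by
  set d : X → ℝ≥0∞ := fun x => ENNReal.ofReal |g₁ x - g₂ x| with hd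
  have hdm : Measurable d := by fun_prop
  have hdi : ∫⁻ x, d x ∂lam ≠ ∞ := by
    have := (i₁.sub i₂).abs
    exact (this.lintegral_lt_top).ne
  have : IsFiniteMeasure (lam.withDensity d) := isFiniteMeasure_withDensity hdi
  set A : Set X := {x | g₂ x < g₁ x} with hA
  have hAm : MeasurableSet A := measurableSet_lt m₂ m₁
  have hmem : MemLp (A.indicator (fun _ => (1 : ℝ))) 1 (lam.withDensity d) :=
    memLp_indicator_const 1 hAm 1 (Or.inr (measure_ne_top _ _))
  obtain ⟨φ, hφ, -⟩ := hmem.exists_boundedContinuous_eLpNorm_sub_le ENNReal.one_ne_top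
    (ε := ENNReal.ofReal ε) (by simpa using hε)
  refine ⟨fun x => max 0 (min 1 (φ x)), by fun_prop, fun x => ⟨le_max_left _ _, by simp⟩, ?_⟩
  rw [eLpNorm_one_eq_lintegral_enorm, lintegral_withDensity_eq_lintegral_mul₀ hdm.aemeasurable
    (by fun_prop (disch := assumption))] at hφ
  rw [integral_eq_lintegral_of_nonneg_ae (Eventually.of_forall fun x => abs_nonneg _)
    (by fun_prop)]
  refine ENNReal.toReal_le_of_le_ofReal hε.le (le_trans (lintegral_mono fun x => ?_) hφ)
  simp only [hd, Pi.mul_apply, Pi.sub_apply, Real.enorm_eq_ofReal_abs]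
  rw [← ENNReal.ofReal_mul (abs_nonneg _), ← abs_mul]
  apply ENNReal.ofReal_le_ofReal
  rw [abs_mul]
  by_cases hx : x ∈ A
  · have hx' : g₂ x < g₁ x := hx
    rw [max_eq_left hx'.le, indicator_of_mem hx]
    have e : max 0 (min 1 (φ x)) * g₁ x + (1 - max 0 (min 1 (φ x))) * g₂ x - g₁ x
      = (g₁ x - g₂ x) * (max 0 (min 1 (φ x)) - 1) := by ring
    rw [e, abs_mul]
    refine mul_le_mul_of_nonneg_left ?_ (abs_nonneg _)
    have := abs_max_sub_max_le_abs (min 1 (φ x)) 1 0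
    have h2 := abs_min_sub_min_le_max 1 (φ x) 1 1
    simp at h2
    rw [max_comm, abs_sub_comm 1 (φ x)]
    rw [max_eq_left (zero_le_one : (0:ℝ) ≤ 1)] at this
    exact this.trans h2
  · have hx' : g₁ x ≤ g₂ x := not_lt.1 hx
    rw [max_eq_right hx', indicator_of_notMem hx]
    have e : max 0 (min 1 (φ x)) * g₁ x + (1 - max 0 (min 1 (φ x))) * g₂ x - g₂ x
      = (g₁ x - g₂ x) * (max 0 (min 1 (φ x))) := by ring
    rw [e, abs_mul]
    refine mul_le_mul_of_nonneg_left ?_ (abs_nonneg _)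
    rw [zero_sub, abs_neg, abs_of_nonneg (le_max_left _ _)]
    exact max_le (abs_nonneg _) ((min_le_right _ _).trans (le_abs_self _))

lemma sup_lemma {X : Type*} [MetricSpace X] [MeasurableSpace X] [BorelSpace X]
    (lam : Measure X) [IsFiniteMeasure lam] (G : Set (X → ℝ))
    (hm : ∀ g ∈ G, Measurable g) (hi : ∀ g ∈ G, Integrable g lam)
    (hmix : ∀ g₁ ∈ G, ∀ g₂ ∈ G, ∀ η : X → ℝ, Continuous η → (∀ x, 0 ≤ η x ∧ η x ≤ 1) →
      (fun x => η x * g₁ x + (1 - η x) * g₂ x) ∈ G)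
    (h0 : (fun _ => (0 : ℝ)) ∈ G)
    (g : ℕ → X → ℝ) (hg : ∀ n, g n ∈ G) (h : X → ℝ≥0∞)
    (hh : ∀ᵐ x ∂lam, h x ≤ ⨆ n, ENNReal.ofReal (g n x)) (B : ℝ≥0∞)
    (hB : ∀ g ∈ G, ENNReal.ofReal (∫ x, g x ∂lam) ≤ B) :
    ∫⁻ x, h x ∂lam ≤ B := by
  let m : ℕ → X → ℝ := fun n => Nat.rec (fun _ => 0) (fun k mk x => max (mk x) (g k x)) n
  have m0 : m 0 = fun _ => 0 := rfl
  have ms : ∀ n, m (n+1) = fun x => max (m n x) (g n x) := fun n => rfl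
  have mm : ∀ n, Measurable (m n) := by
    intro n; induction n with
    | zero => rw [m0]; fun_prop
    | succ k ih => rw [ms]; exact ih.max (hm _ (hg k))
  have mi : ∀ n, Integrable (m n) lam := by
    intro n; induction n with
    | zero => rw [m0]; exact integrable_zero _ _ _
    | succ k ih => rw [ms]; exact ih.sup (hi _ (hg k))
  have mono : Monotone m := monotone_nat_of_le_succ fun n x => by rw [ms]; exact le_max_left _ _
  have mnn : ∀ n x, 0 ≤ m n x := fun n x => by
    have := mono (Nat.zero_le n) x; rwa [m0] at this
  have key : ∀ n, ∀ ε > 0, ∃ f ∈ G, ∫ x, |f x - m n x| ∂lam ≤ ε := by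
    intro n; induction n with
    | zero => intro ε hε; exact ⟨_, h0, by simp [m0, hε.le]⟩
    | succ k ih =>
      intro ε hε
      obtain ⟨f, hf, hfe⟩ := ih (ε/2) (by positivity)
      obtain ⟨η, hηc, hη, hηe⟩ := mix_approx lam f (g k) (hm _ hf) (hm _ (hg k)) (hi _ hf)
        (hi _ (hg k)) (ε/2) (by positivity)
      have hmem := hmix f hf _ (hg k) η hηc hη
      refine ⟨_, hmem, ?_⟩
      have i1 : Integrable (fun x => |η x * f x + (1 - η x) * g k x - max (f x) (g k x)|) lam :=
        ((hi _ hmem).sub ((hi _ hf).sup (hi _ (hg k)))).abs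
      have i2 : Integrable (fun x => |f x - m k x|) lam := ((hi _ hf).sub (mi k)).abs
      calc _ ≤ ∫ x, (|η x * f x + (1 - η x) * g k x - max (f x) (g k x)| + |f x - m k x|) ∂lam := by
            refine integral_mono ((hi _ hmem).sub (mi (k+1))).abs (i1.add i2) fun x => ?_
            simp only [ms]
            refine (abs_sub_le _ (max (f x) (g k x)) _).trans ?_
            exact add_le_add le_rfl (abs_max_sub_max_le_abs _ _ _)
        _ ≤ ε := by rw [integral_add i1 i2]; linarith
  have hmB : ∀ n, ∫⁻ x, ENNReal.ofReal (m n x) ∂lam ≤ B := by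
    intro n
    rw [← ofReal_integral_eq_lintegral_ofReal (mi n) (Eventually.of_forall (mnn n))]
    refine ENNReal.le_of_forall_pos_le_add fun ε hε _ => ?_
    obtain ⟨f, hf, hfe⟩ := key n ε hε
    have : ∫ x, m n x ∂lam ≤ ∫ x, f x ∂lam + ε := by
      have h1 : ∫ x, (m n x - f x) ∂lam ≤ ∫ x, |f x - m n x| ∂lam :=
        integral_mono ((mi n).sub (hi _ hf)) ((hi _ hf).sub (mi n)).abs fun x => by
          rw [abs_sub_comm]; exact le_abs_self _
      rw [integral_sub (mi n) (hi _ hf)] at h1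
      linarith
    calc _ ≤ ENNReal.ofReal (∫ x, f x ∂lam + ε) := ENNReal.ofReal_le_ofReal this
      _ ≤ ENNReal.ofReal (∫ x, f x ∂lam) + ENNReal.ofReal ε := ENNReal.ofReal_add_le
      _ ≤ B + ε := by gcongr; exact hB f hf; simp
  calc ∫⁻ x, h x ∂lam ≤ ∫⁻ x, ⨆ n, ENNReal.ofReal (m n x) ∂lam := by
        refine lintegral_mono_ae (hh.mono fun x hx => hx.trans ?_)
        refine iSup_le fun n => le_trans ?_ (le_iSup _ (n+1))
        rw [ms]; exact ENNReal.ofReal_le_ofReal (le_max_right _ _)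
    _ = ⨆ n, ∫⁻ x, ENNReal.ofReal (m n x) ∂lam :=
        lintegral_iSup (fun n => (mm n).ennreal_ofReal)
          fun i j hij x => ENNReal.ofReal_le_ofReal (mono hij x)
    _ ≤ B := iSup_le hmB


lemma secondCountable_prob (X : Type*) [MetricSpace X] [SecondCountableTopology X]
    [MeasurableSpace X] [BorelSpace X] : SecondCountableTopology (ProbabilityMeasure X) := by
  obtain ⟨F, hF⟩ := Metric.PiNatEmbed.exists_embedding_to_hilbert_cube (X := X)
  have hFm : Measurable F := hF.continuous.measurable
  let Φ : ProbabilityMeasure X → ProbabilityMeasure (ℕ → unitInterval) :=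
    fun μ => μ.map hFm.aemeasurable
  have hΦ : Continuous Φ := ProbabilityMeasure.continuous_map hF.continuous
  have hsc : SecondCountableTopology (ProbabilityMeasure (ℕ → unitInterval)) := by
    letI := TopologicalSpace.metrizableSpaceMetric (ProbabilityMeasure (ℕ → unitInterval))
    infer_instance
  have hind : IsInducing Φ := by
    rw [isInducing_iff_nhds]
    intro μ
    refine le_antisymm (hΦ.tendsto μ).le_comap ?_
    have : Tendsto (fun ν : ProbabilityMeasure X => ν) (comap Φ (𝓝 (Φ μ))) (𝓝 μ) := by
      refine tendsto_of_forall_isOpen_le_liminf' fun G hG => ?_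
      obtain ⟨G', hG', rfl⟩ := hF.isInducing.isOpen_iff.1 hG
      have := ProbabilityMeasure.le_liminf_measure_open_of_tendsto
        (tendsto_comap (f := Φ) (x := 𝓝 (Φ μ))) hG'
      have e : ∀ ν : ProbabilityMeasure X, (Φ ν : Measure _) G' = (ν : Measure X) (F ⁻¹' G') := by
        intro ν
        simp only [Φ, ProbabilityMeasure.toMeasure_map]
        rw [Measure.map_apply hFm hG'.measurableSet]
      simpa only [e] using this
    exact this
  exact hind.secondCountableTopology

lemma continuous_to_prob {Z X₂ : Type*} [TopologicalSpace Z] [MetricSpace X₂]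
    [MeasurableSpace X₂] [BorelSpace X₂] (e : Z → ProbabilityMeasure X₂)
    (h : ∀ f : X₂ →ᵇ ℝ, Continuous fun z => ∫ y, f y ∂(e z : Measure X₂)) : Continuous e := by
  rw [ProbabilityMeasure.continuous_iff_forall_continuous_integral]
  exact h

lemma measurable_of_kernel {X₁ X₂ : Type*} [MeasurableSpace X₁] [MetricSpace X₂]
    [SecondCountableTopology X₂] [MeasurableSpace X₂] [BorelSpace X₂]
    (κ : ProbabilityTheory.Kernel X₁ X₂) [hκ : ProbabilityTheory.IsMarkovKernel κ] :
    @Measurable X₁ (ProbabilityMeasure X₂) _ (borel _)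
      (fun x => (⟨κ x, inferInstance⟩ : ProbabilityMeasure X₂)) := by
  have hsc := secondCountable_prob X₂
  letI : MeasurableSpace (ProbabilityMeasure X₂) := borel _
  haveI : BorelSpace (ProbabilityMeasure X₂) := ⟨rfl⟩
  refine measurable_of_isOpen fun U hU => ?_
  have htop : (inferInstance : TopologicalSpace (ProbabilityMeasure X₂)) =
      TopologicalSpace.generateFrom
        {s | ∃ (f : X₂ →ᵇ ℝ) (V : Set ℝ), IsOpen V ∧
          s = {p : ProbabilityMeasure X₂ | ∫ y, f y ∂(p : Measure X₂) ∈ V}} := by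
    refine le_antisymm (le_generateFrom ?_) ?_
    · rintro s ⟨f, V, hV, rfl⟩
      exact hV.preimage (ProbabilityMeasure.continuous_integral_boundedContinuousFunction f)
    · refine continuous_id_iff_le.1 (@continuous_to_prob _ _ (_) _ _ _ id ?_)
      intro f
      refine continuous_def.2 fun V hV => ?_
      exact TopologicalSpace.isOpen_generateFrom_of_mem ⟨f, V, hV, rfl⟩
  have hb := borel_eq_generateFrom_of_subbasis htop
  have hU' : MeasurableSet U := hU.measurableSet
  revert hU'
  have : @Measurable X₁ (ProbabilityMeasure X₂) _ (borel _)
      (fun x => (⟨κ x, inferInstance⟩ : ProbabilityMeasure X₂)) := by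
    rw [hb]
    refine measurable_generateFrom ?_
    rintro s ⟨f, V, hV, rfl⟩
    have hm : Measurable fun x => ∫ y, f y ∂(κ x) :=
      (StronglyMeasurable.integral_kernel (κ := κ)
        (f := fun y => f y) (f.continuous.stronglyMeasurable)).measurable
    exact hm hV.measurableSet
  exact fun hU' => this hU'


lemma ent_affine (F : EntropyFn) (a : ℝ) (ha : 0 ≤ a) (h : ENNReal.ofReal a < F.recC) :
    ∃ b : ℝ, 0 ≤ b ∧ ∀ s, 0 ≤ s → ENNReal.ofReal (a * s) ≤ F.F s + ENNReal.ofReal b := by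
  obtain ⟨s0, hs0, hF0⟩ := F.dom
  obtain ⟨a', haa', ha'⟩ : ∃ a' : ℝ, a < a' ∧ ENNReal.ofReal a' < F.recC := by
    obtain ⟨r, hr1, hr2⟩ := ENNReal.lt_iff_exists_nnreal_btwn.1 h
    refine ⟨r, ?_, by simpa using hr2⟩
    have := (ENNReal.ofReal_lt_iff_lt_toReal ha (by simp)).1 hr1
    simpa using this
  have hfr : ∃ᶠ s in atTop, ENNReal.ofReal a' < F.F s / ENNReal.ofReal s :=
    frequently_lt_of_lt_limsup (by isBoundedDefault) ha'
  set f0 := (F.F s0).toReal with hf0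
  have hF0' : F.F s0 = ENNReal.ofReal f0 := (ENNReal.ofReal_toReal hF0).symm
  have hf0n : 0 ≤ f0 := ENNReal.toReal_nonneg
  obtain ⟨s1, h1, h2⟩ := (hfr.and_eventually (eventually_gt_atTop (max s0 (f0 / (a' - a))))).exists
  have hs1 : s0 < s1 := lt_of_le_of_lt (le_max_left _ _) h2
  have hs1' : f0 < (a' - a) * s1 := by
    have := lt_of_le_of_lt (le_max_right _ _) h2
    rw [div_lt_iff₀ (by linarith)] at this
    linarith
  have hs1p : 0 < s1 := hs0.trans hs1
  have h1' : ENNReal.ofReal (a' * s1) < F.F s1 := by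
    rw [ENNReal.ofReal_mul (by linarith)]
    rw [ENNReal.lt_div_iff_mul_lt (by simp [hs1p]) (by simp)] at h1
    exact h1
  refine ⟨a * s1, by positivity, fun s hs => ?_⟩
  rcases le_or_gt s s1 with hle | hlt
  · refine le_trans (ENNReal.ofReal_le_ofReal ?_) le_add_self
    exact mul_le_mul_of_nonneg_left hle ha
  · refine le_trans ?_ le_self_add
    by_contra hcon
    push Not at hcon
    have hd : 0 < s - s0 := by linarith
    set t := (s1 - s0) / (s - s0) with ht
    have ht0 : 0 ≤ t := div_nonneg (by linarith) hd.le
    have ht1 : t ≤ 1 := by rw [ht, div_le_one hd]; linarith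
    have hts : t * (s - s0) = s1 - s0 := by rw [ht]; field_simp
    have hc := F.convex' s hs s0 hs0.le t ht0 ht1
    have e : t * s + (1 - t) * s0 = s1 := by linarith
    rw [e, hF0', ← ENNReal.ofReal_mul (by linarith)] at hc
    have : F.F s1 ≤ ENNReal.ofReal (t * (a * s) + (1 - t) * f0) := by
      refine hc.trans ?_
      rw [ENNReal.ofReal_add (by positivity) (mul_nonneg (by linarith) hf0n), ENNReal.ofReal_mul ht0]
      gcongr
    have h3 := lt_of_lt_of_le h1' this
    have h4 := (ENNReal.ofReal_lt_ofReal_iff_of_nonneg (mul_nonneg (by linarith) hs1p.le)).1 h3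
    have h5 : t * s ≤ s1 := by nlinarith
    nlinarith [mul_le_mul_of_nonneg_left h5 ha, mul_nonneg ht0 hf0n]

/-- valid affine minorants -/
def EV (F : EntropyFn) (a b : ℝ) : Prop := ∀ s, 0 ≤ s → ENNReal.ofReal (a * s - b) ≤ F.F s

lemma EV.rec_le {F : EntropyFn} {a b : ℝ} (h : EV F a b) : ENNReal.ofReal a ≤ F.recC := by
  have ht : Tendsto (fun s : ℝ => ENNReal.ofReal (a - b / s)) atTop (𝓝 (ENNReal.ofReal a)) := by
    refine (ENNReal.continuous_ofReal.tendsto _).comp ?_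
    have : Tendsto (fun s : ℝ => a - b / s) atTop (𝓝 (a - 0)) :=
      tendsto_const_nhds.sub (tendsto_const_nhds.div_atTop tendsto_id)
    simpa using this
  rw [← ht.limsup_eq]
  refine limsup_le_limsup ?_ (by isBoundedDefault) (by isBoundedDefault)
  filter_upwards [eventually_gt_atTop 0] with s hs
  rw [ENNReal.le_div_iff_mul_le (by simp [hs]) (by simp), ← ENNReal.ofReal_mul' hs.le]
  refine le_trans (le_of_eq ?_) (h s hs.le)
  congr 1
  field_simp

lemma EV.zero (F : EntropyFn) : EV F 0 0 := fun s hs => by simp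

lemma EV.mix {F : EntropyFn} {a b a' b' t : ℝ} (h : EV F a b) (h' : EV F a' b') (ht0 : 0 ≤ t)
    (ht1 : t ≤ 1) : EV F (t * a + (1 - t) * a') (t * b + (1 - t) * b') := by
  intro s hs
  refine le_trans (ENNReal.ofReal_le_ofReal (q := max (a * s - b) (a' * s - b')) ?_) ?_
  · have h1 := le_max_left (a * s - b) (a' * s - b')
    have h2 := le_max_right (a * s - b) (a' * s - b')
    nlinarith [mul_le_mul_of_nonneg_left h1 ht0, mul_le_mul_of_nonneg_left h2 (sub_nonneg.2 ht1)]
  · rcases max_choice (a * s - b) (a' * s - b') with e | e <;> rw [e]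
    exacts [h s hs, h' s hs]

lemma EV.exists_rec (F : EntropyFn) (t : ℝ≥0∞) (ht : t < F.recC) :
    ∃ a b, EV F a b ∧ t < ENNReal.ofReal a := by
  obtain ⟨r, hr1, hr2⟩ := ENNReal.lt_iff_exists_nnreal_btwn.1 ht
  obtain ⟨b, hb, h⟩ := ent_affine F r r.2 (by simpa using hr2)
  refine ⟨r, b, fun s hs => ?_, by simpa using hr1⟩
  rw [ENNReal.ofReal_sub _ hb, tsub_le_iff_right]
  exact h s hs

lemma EV.exists_val (F : EntropyFn) (s₀ : ℝ) (hs₀ : 0 ≤ s₀) (t : ℝ≥0∞) (ht : t < F.F s₀) :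
    ∃ a b, EV F a b ∧ t < ENNReal.ofReal (a * s₀ - b) := by
  obtain ⟨r, hr1, hr2⟩ := ENNReal.lt_iff_exists_nnreal_btwn.1 ht
  obtain ⟨r', hr'1, hr'2⟩ := ENNReal.lt_iff_exists_nnreal_btwn.1 hr2
  have hl := F.lsc s₀ hs₀ r' hr'2
  rw [Filter.Eventually, Metric.mem_nhdsWithin_iff] at hl
  obtain ⟨η, hη, hball⟩ := hl
  obtain ⟨l, b, h1, h2⟩ := hb_lemma {p : ℝ × ℝ | 0 ≤ p.1 ∧ 0 ≤ p.2 ∧ F.F p.1 ≤ ENNReal.ofReal p.2}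
    (by
      rintro ⟨x1, y1⟩ ⟨hx1, hy1, hf1⟩ ⟨x2, y2⟩ ⟨hx2, hy2, hf2⟩ u v hu hv huv
      have hv' : v = 1 - u := by linarith
      subst hv'
      dsimp at *
      refine ⟨by positivity, by positivity, ?_⟩
      refine (F.convex' x1 hx1 x2 hx2 u hu (by linarith)).trans ?_
      rw [ENNReal.ofReal_add (by positivity) (by positivity), ENNReal.ofReal_mul hu,
        ENNReal.ofReal_mul hv]
      gcongr)
    s₀ η r' 0 hη (fun a ha => ha.2.1)
    (by
      rintro ⟨x, y⟩ ⟨hx, hy, hf⟩ hd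
      have h3 : (r' : ℝ≥0∞) < F.F x := hball ⟨by simpa [dist_eq_norm] using hd, hx⟩
      have h4 := h3.trans_le hf
      have h5 : (r' : ℝ≥0∞) = ENNReal.ofReal r' := by simp
      rw [h5] at h4
      exact (ENNReal.lt_ofReal_iff_toReal_lt (by simp)).1 h4 |>.le.trans' (by simp))
    r (by exact_mod_cast hr'1)
  have hl1 : ∀ s, l s = l 1 * s := fun s => by
    have := l.map_smul s 1
    simp only [smul_eq_mul, mul_one] at this
    rw [this, mul_comm]
  refine ⟨l 1, -b, fun s hs => ?_, ?_⟩
  · rcases eq_or_ne (F.F s) ⊤ with e | e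
    · simp [e]
    · have := h1 (s, (F.F s).toReal) ⟨hs, ENNReal.toReal_nonneg, by simp [ENNReal.ofReal_toReal e]⟩
      rw [← ENNReal.ofReal_toReal e]
      refine ENNReal.ofReal_le_ofReal ?_
      simp only [hl1 s] at this
      linarith
  · refine hr1.trans_le ?_
    rw [hl1 s₀] at h2
    rw [← ENNReal.ofReal_coe_nnreal]
    exact ENNReal.ofReal_le_ofReal (by linarith)

lemma ent_seq (F : EntropyFn) : ∃ p : ℕ → ℝ × ℝ, (∀ n, EV F (p n).1 (p n).2) ∧
    (∀ s, 0 ≤ s → F.F s ≤ ⨆ n, ENNReal.ofReal ((p n).1 * s - (p n).2)) ∧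
    F.recC ≤ ⨆ n, ENNReal.ofReal (p n).1 := by
  let P : Set (ℝ × ℝ) := {p | EV F p.1 p.2}
  haveI : Nonempty P := ⟨⟨(0, 0), EV.zero F⟩⟩
  refine ⟨fun n => (TopologicalSpace.denseSeq P n : ℝ × ℝ),
    fun n => (TopologicalSpace.denseSeq P n).2, fun s hs => ?_, ?_⟩
  · refine le_of_forall_lt fun t ht => ?_
    obtain ⟨a, b, hab, hlt⟩ := EV.exists_val F s hs t ht
    have ho : IsOpen {p : P | t < ENNReal.ofReal (p.1.1 * s - p.1.2)} :=
      isOpen_lt continuous_const (ENNReal.continuous_ofReal.comp (by fun_prop))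
    obtain ⟨n, hn⟩ := (TopologicalSpace.denseRange_denseSeq P).exists_mem_open ho
      ⟨⟨(a, b), hab⟩, hlt⟩
    exact lt_of_lt_of_le hn (le_iSup (fun n => ENNReal.ofReal
      ((TopologicalSpace.denseSeq P n).1.1 * s - (TopologicalSpace.denseSeq P n).1.2)) n)
  · refine le_of_forall_lt fun t ht => ?_
    obtain ⟨a, b, hab, hlt⟩ := EV.exists_rec F t ht
    have ho : IsOpen {p : P | t < ENNReal.ofReal (p.1.1)} :=
      isOpen_lt continuous_const (ENNReal.continuous_ofReal.comp (by fun_prop))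
    obtain ⟨n, hn⟩ := (TopologicalSpace.denseRange_denseSeq P).exists_mem_open ho
      ⟨⟨(a, b), hab⟩, hlt⟩
    exact lt_of_lt_of_le hn (le_iSup (fun n => ENNReal.ofReal
      ((TopologicalSpace.denseSeq P n).1.1)) n)

lemma ofReal_integral_le' {X : Type*} [MeasurableSpace X] (μ : Measure X) (f : X → ℝ)
    (hf : Integrable f μ) : ENNReal.ofReal (∫ x, f x ∂μ) ≤ ∫⁻ x, ENNReal.ofReal (f x) ∂μ := by
  have h1 : ∫ x, f x ∂μ ≤ ∫ x, max (f x) 0 ∂μ :=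
    integral_mono hf hf.pos_part (fun x => le_max_left _ _)
  refine (ENNReal.ofReal_le_ofReal h1).trans ?_
  rw [ofReal_integral_eq_lintegral_ofReal hf.pos_part (ae_of_all _ fun x => le_max_right _ _)]
  refine lintegral_mono fun x => ?_
  simp only [ENNReal.ofReal_max]
  simp


section entdual
variable {X : Type*} [MetricSpace X] [SecondCountableTopology X] [MeasurableSpace X] [BorelSpace X]

lemma bcf_mul_int (γ μ : Measure X) [IsFiniteMeasure γ] [IsFiniteMeasure μ] (a b : X →ᵇ ℝ) :
    Integrable (fun x => a x * (γ.rnDeriv μ x).toReal - b x) μ := by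
  have h1 : Integrable (fun x => a x * (γ.rnDeriv μ x).toReal) μ := by
    refine Integrable.bdd_mul (c := ‖a‖) Measure.integrable_toReal_rnDeriv ?_ ?_
    · exact a.continuous.aestronglyMeasurable
    · exact ae_of_all _ fun x => a.norm_coe_le_norm x
  exact h1.sub (b.integrable μ)

lemma ent_int_eq (γ μ : Measure X) [IsFiniteMeasure γ] [IsFiniteMeasure μ] (a b : X →ᵇ ℝ) :
    ∫ x, a x ∂γ - ∫ x, b x ∂μ = ∫ x, a x ∂(γ.singularPart μ) +
      ∫ x, (a x * (γ.rnDeriv μ x).toReal - b x) ∂μ := by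
  have h1 : Integrable (fun x => a x * (γ.rnDeriv μ x).toReal) μ := by
    refine Integrable.bdd_mul (c := ‖a‖) Measure.integrable_toReal_rnDeriv ?_ ?_
    · exact a.continuous.aestronglyMeasurable
    · exact ae_of_all _ fun x => a.norm_coe_le_norm x
  have hd : γ = γ.singularPart μ + μ.withDensity (γ.rnDeriv μ) :=
    (γ.haveLebesgueDecomposition_add μ)
  rw [integral_sub h1 (b.integrable μ)]
  conv_lhs => rw [hd]
  rw [integral_add_measure (a.integrable _) (a.integrable _)]
  rw [integral_withDensity_eq_integral_toReal_smul (Measure.measurable_rnDeriv _ _)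
    (Measure.rnDeriv_lt_top γ μ)]
  simp only [smul_eq_mul, mul_comm]
  ring

lemma ent_ge (F : EntropyFn) (γ μ : Measure X) [IsFiniteMeasure γ] [IsFiniteMeasure μ]
    (a b : X →ᵇ ℝ) (h : ∀ x, EV F (a x) (b x)) :
    ENNReal.ofReal (∫ x, a x ∂γ - ∫ x, b x ∂μ) ≤ entF F γ μ := by
  rw [ent_int_eq, add_comm]
  refine ENNReal.ofReal_add_le.trans ?_
  refine add_le_add ?_ ?_
  · refine (ofReal_integral_le' _ _ (bcf_mul_int γ μ a b)).trans ?_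
    exact lintegral_mono fun x => h x _ ENNReal.toReal_nonneg
  · refine (ofReal_integral_le' _ _ (a.integrable _)).trans ?_
    refine (lintegral_mono (g := fun _ => F.recC) fun x => (h x).rec_le).trans ?_
    simp

lemma ent_le (F : EntropyFn) (γ μ : Measure X) [IsFiniteMeasure γ] [IsFiniteMeasure μ] (B : ℝ≥0∞)
    (hB : ∀ a b : X →ᵇ ℝ, (∀ x, EV F (a x) (b x)) →
      ENNReal.ofReal (∫ x, a x ∂γ - ∫ x, b x ∂μ) ≤ B) : entF F γ μ ≤ B := by
  classical
  set σ := γ.singularPart μ with hσ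
  set f := fun x => (γ.rnDeriv μ x).toReal with hf
  have hfm : Measurable f := (Measure.measurable_rnDeriv γ μ).ennreal_toReal
  obtain ⟨N, hN, hN1, hN2⟩ := (Measure.mutuallySingular_singularPart γ μ).symm
  have haeN : ∀ᵐ x ∂μ, x ∉ N := by
    rw [ae_iff]; simpa using hN1
  have haeσ : ∀ᵐ x ∂σ, x ∈ N := by
    rw [ae_iff]; exact hN2
  set gf : (X →ᵇ ℝ) → (X →ᵇ ℝ) → X → ℝ := fun a b x => if x ∈ N then a x else a x * f x - b x
    with hgf
  have hgi : ∀ a b : X →ᵇ ℝ, Integrable (gf a b) (μ + σ) ∧ ∫ x, gf a b x ∂(μ + σ) =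
      ∫ x, a x ∂γ - ∫ x, b x ∂μ := by
    intro a b
    have e1 : gf a b =ᵐ[μ] fun x => a x * f x - b x := by
      filter_upwards [haeN] with x hx; simp [hgf, hx]
    have e2 : gf a b =ᵐ[σ] fun x => a x := by
      filter_upwards [haeσ] with x hx; simp [hgf, hx]
    have i1 : Integrable (gf a b) μ := (bcf_mul_int γ μ a b).congr e1.symm
    have i2 : Integrable (gf a b) σ := (a.integrable σ).congr e2.symm
    refine ⟨i1.add_measure i2, ?_⟩
    rw [integral_add_measure i1 i2, integral_congr_ae e1, integral_congr_ae e2, ent_int_eq, add_comm]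
  obtain ⟨p, hp, hp1, hp2⟩ := ent_seq F
  let G : Set (X → ℝ) := {g | ∃ a b : X →ᵇ ℝ, (∀ x, EV F (a x) (b x)) ∧ g = gf a b}
  have hfin : entF F γ μ = ∫⁻ x, (if x ∈ N then F.recC else F.F (f x)) ∂(μ + σ) := by
    rw [lintegral_add_measure, entF]
    congr 1
    · refine lintegral_congr_ae ?_
      filter_upwards [haeN] with x hx; simp [hx, hf]
    · rw [← lintegral_const]
      refine lintegral_congr_ae ?_
      filter_upwards [haeσ] with x hx; simp [hx]
  rw [hfin]
  refine sup_lemma (μ + σ) G ?_ ?_ ?_ ?_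
    (fun n => gf (BoundedContinuousFunction.const X (p n).1)
      (BoundedContinuousFunction.const X (p n).2)) ?_ _ ?_ B ?_
  · rintro g ⟨a, b, -, rfl⟩
    exact Measurable.ite hN a.continuous.measurable
      ((a.continuous.measurable.mul hfm).sub b.continuous.measurable)
  · rintro g ⟨a, b, -, rfl⟩
    exact (hgi a b).1
  · rintro g₁ ⟨a, b, hab, rfl⟩ g₂ ⟨a', b', hab', rfl⟩ η hη hη1
    let e : X →ᵇ ℝ := BoundedContinuousFunction.ofNormedAddCommGroup η hη 1 (fun x => by
      rw [Real.norm_eq_abs, abs_le]; constructor <;> linarith [(hη1 x).1, (hη1 x).2])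
    have he : ∀ x, e x = η x := fun x => rfl
    refine ⟨e * a + (1 - e) * a', e * b + (1 - e) * b', fun x => ?_, ?_⟩
    · simpa [he] using (hab x).mix (hab' x) (hη1 x).1 (hη1 x).2
    · ext x
      simp only [hgf]
      split_ifs
      · simp [he]
      · simp [he]; ring
  · refine ⟨0, 0, fun x => by simpa using EV.zero F, ?_⟩
    ext x; simp [hgf]
  · intro n
    exact ⟨_, _, fun x => by simpa using hp n, rfl⟩
  · refine ae_of_all _ fun x => ?_
    simp only [hgf]
    by_cases hx : x ∈ N
    · simpa [hx] using hp2
    · simpa [hx] using hp1 (f x) ENNReal.toReal_nonneg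
  · rintro g ⟨a, b, hab, rfl⟩
    rw [(hgi a b).2]
    exact hB a b hab

lemma ent_lsc (F : EntropyFn) (μ : Measure X) [IsFiniteMeasure μ] :
    LowerSemicontinuous fun γ : FiniteMeasure X => entF F (γ : Measure X) μ := by
  intro γ t ht
  have : ∃ a b : X →ᵇ ℝ, (∀ x, EV F (a x) (b x)) ∧
      t < ENNReal.ofReal (∫ x, a x ∂(γ : Measure X) - ∫ x, b x ∂μ) := by
    by_contra hcon
    push Not at hcon
    exact absurd (ent_le F γ μ t hcon) (not_le.2 ht)
  obtain ⟨a, b, hab, hlt⟩ := this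
  have hc : Continuous fun γ : FiniteMeasure X =>
      ENNReal.ofReal (∫ x, a x ∂(γ : Measure X) - ∫ x, b x ∂μ) :=
    ENNReal.continuous_ofReal.comp
      ((FiniteMeasure.continuous_integral_boundedContinuousFunction a).sub continuous_const)
  filter_upwards [(isOpen_lt continuous_const hc).mem_nhds hlt] with γ' hγ'
  exact lt_of_lt_of_le hγ' (ent_ge F γ' μ a b hab)

end entdual

lemma ent_coer {X : Type*} [MeasurableSpace X] (F : EntropyFn) (γ μ : Measure X)
    [IsFiniteMeasure γ] [IsFiniteMeasure μ] (a b : ℝ) (hb : 0 ≤ b)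
    (h : ∀ s, 0 ≤ s → ENNReal.ofReal (a * s) ≤ F.F s + ENNReal.ofReal b) (A : Set X)
    (hA : MeasurableSet A) :
    ENNReal.ofReal a * γ A ≤ entF F γ μ + ENNReal.ofReal b * μ A := by
  have hv : EV F a b := fun s hs => by
    rw [ENNReal.ofReal_sub _ hb, tsub_le_iff_right]
    exact h s hs
  have hd : γ = γ.singularPart μ + μ.withDensity (γ.rnDeriv μ) :=
    (γ.haveLebesgueDecomposition_add μ)
  have h1 : ENNReal.ofReal a * (μ.withDensity (γ.rnDeriv μ)) A ≤
      (∫⁻ x, F.F ((γ.rnDeriv μ x).toReal) ∂μ) + ENNReal.ofReal b * μ A := by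
    rw [withDensity_apply _ hA, ← lintegral_const_mul _ (Measure.measurable_rnDeriv _ _)]
    calc ∫⁻ x in A, ENNReal.ofReal a * γ.rnDeriv μ x ∂μ
        ≤ ∫⁻ x in A, F.F ((γ.rnDeriv μ x).toReal) + ENNReal.ofReal b ∂μ := by
          refine lintegral_mono_ae (ae_restrict_of_ae ?_)
          filter_upwards [Measure.rnDeriv_lt_top γ μ] with x hx
          refine le_trans (le_of_eq ?_) (h _ ENNReal.toReal_nonneg)
          rw [ENNReal.ofReal_mul' ENNReal.toReal_nonneg, ENNReal.ofReal_toReal hx.ne]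
      _ = (∫⁻ x in A, F.F ((γ.rnDeriv μ x).toReal) ∂μ) + ENNReal.ofReal b * μ A := by
          rw [lintegral_add_right _ measurable_const]; simp
      _ ≤ _ := by
          gcongr
          exact Measure.restrict_le_self
  have h2 : ENNReal.ofReal a * γ.singularPart μ A ≤ F.recC * γ.singularPart μ univ :=
    mul_le_mul' hv.rec_le (measure_mono (subset_univ _))
  have h3 : γ A = γ.singularPart μ A + (μ.withDensity (γ.rnDeriv μ)) A := by
    conv_lhs => rw [hd]
    rfl
  rw [h3, mul_add, entF]
  refine (add_le_add h2 h1).trans (le_of_eq ?_)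
  ring


lemma nhds_prob_basis {X : Type*} [MetricSpace X] [MeasurableSpace X] [BorelSpace X]
    (p₀ : ProbabilityMeasure X) (U : Set (ProbabilityMeasure X)) (hU : U ∈ 𝓝 p₀) :
    ∃ (I : Finset (X →ᵇ ℝ)) (η : ℝ), 0 < η ∧ ∀ q : ProbabilityMeasure X,
      ‖(fun i : I => ∫ y, (i : X →ᵇ ℝ) y ∂(q : Measure X)) -
        (fun i : I => ∫ y, (i : X →ᵇ ℝ) y ∂(p₀ : Measure X))‖ < η → q ∈ U := by
  let Φ : ProbabilityMeasure X → ((X →ᵇ ℝ) → ℝ) := fun q f => ∫ y, f y ∂(q : Measure X)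
  have hle : comap Φ (𝓝 (Φ p₀)) ≤ 𝓝 p₀ := by
    have : Tendsto (fun q : ProbabilityMeasure X => q) (comap Φ (𝓝 (Φ p₀))) (𝓝 p₀) := by
      rw [ProbabilityMeasure.tendsto_iff_forall_integral_tendsto]
      intro f
      have := (tendsto_comap (f := Φ) (x := 𝓝 (Φ p₀)))
      rw [tendsto_pi_nhds] at this
      exact this f
    exact this
  obtain ⟨V, hV, hVU⟩ := mem_comap.1 (hle hU)
  rw [nhds_pi, Filter.mem_pi] at hV
  obtain ⟨I, hI, t, ht, hsub⟩ := hV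
  lift I to Finset (X →ᵇ ℝ) using hI
  have hn : (Set.univ.pi fun i : I => t i) ∈
      𝓝 (fun i : I => ∫ y, (i : X →ᵇ ℝ) y ∂(p₀ : Measure X)) :=
    set_pi_mem_nhds Set.finite_univ fun i _ => ht i
  obtain ⟨η, hη, hb⟩ := Metric.mem_nhds_iff.1 hn
  refine ⟨I, η, hη, fun q hq => hVU (hsub ?_)⟩
  have := hb (a := fun i : I => ∫ y, (i : X →ᵇ ℝ) y ∂(q : Measure X))
    (by rw [Metric.mem_ball, dist_eq_norm]; exact hq)
  intro i hi
  exact this ⟨i, hi⟩ (mem_univ _)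

lemma isOpen_lt_lsc {Z : Type*} [TopologicalSpace Z] (g D : Z → ℝ≥0∞) (hg : Continuous g)
    (hD : LowerSemicontinuous D) : IsOpen {z | g z < D z} := by
  rw [isOpen_iff_mem_nhds]
  intro z hz
  obtain ⟨c, hc1, hc2⟩ := exists_between (show g z < D z from hz)
  filter_upwards [hg.continuousAt.eventually_lt continuousAt_const hc1, hD z c hc2] with w h1 h2
  exact h1.trans h2

def mixP {X : Type*} [MeasurableSpace X] (p q : ProbabilityMeasure X) (t : ℝ) (h0 : 0 ≤ t)
    (h1 : t ≤ 1) : ProbabilityMeasure X :=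
  ⟨ENNReal.ofReal t • (p : Measure X) + ENNReal.ofReal (1 - t) • (q : Measure X), ⟨by
    simp only [Measure.coe_add, Measure.coe_smul, Pi.add_apply, Pi.smul_apply, measure_univ,
      smul_eq_mul, mul_one]
    rw [← ENNReal.ofReal_add h0 (by linarith)]; simp⟩⟩

lemma mixP_int {X : Type*} [MetricSpace X] [MeasurableSpace X] [BorelSpace X]
    (p q : ProbabilityMeasure X) (t : ℝ) (h0 : 0 ≤ t)
    (h1 : t ≤ 1) (f : X →ᵇ ℝ) : ∫ y, f y ∂(mixP p q t h0 h1 : Measure X) =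
      t * ∫ y, f y ∂(p : Measure X) + (1 - t) * ∫ y, f y ∂(q : Measure X) := by
  simp only [mixP, ProbabilityMeasure.coe_mk]
  rw [integral_add_measure ((f.integrable _).smul_measure (by simp))
    ((f.integrable _).smul_measure (by simp)), integral_smul_measure, integral_smul_measure]
  simp [h0, h1]

def DConv {X₁ X₂ : Type*} [MeasurableSpace X₂]
    (D : X₁ → ProbabilityMeasure X₂ → ℝ≥0∞) : Prop :=
  ∀ (x : X₁) (p q m : ProbabilityMeasure X₂) (t : ℝ), 0 ≤ t → t ≤ 1 →
      (m : Measure X₂) = ENNReal.ofReal t • (p : Measure X₂)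
          + ENNReal.ofReal (1 - t) • (q : Measure X₂) →
      D x m ≤ ENNReal.ofReal t * D x p + ENNReal.ofReal (1 - t) * D x q

section transport
variable {X₁ : Type*} [MetricSpace X₁] [PolishSpace X₁] [MeasurableSpace X₁] [BorelSpace X₁]
    {X₂ : Type*} [MetricSpace X₂] [PolishSpace X₂] [MeasurableSpace X₂] [BorelSpace X₂]

lemma rep_hb (D : X₁ → ProbabilityMeasure X₂ → ℝ≥0∞)
    (hl : LowerSemicontinuous fun q : X₁ × ProbabilityMeasure X₂ => D q.1 q.2)
    (hc : DConv D) (x₀ : X₁) (p₀ : ProbabilityMeasure X₂) (r' r'' : ℝ≥0) (hrr : r' < r'')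
    (ht : (r'' : ℝ≥0∞) < D x₀ p₀) :
    ∃ φ : X₂ →ᵇ ℝ, (∀ q : ProbabilityMeasure X₂,
      ENNReal.ofReal (∫ y, φ y ∂(q : Measure X₂)) ≤ D x₀ q) ∧
      (r' : ℝ) ≤ ∫ y, φ y ∂(p₀ : Measure X₂) := by
  classical
  have hU : {q | (r'' : ℝ≥0∞) < D x₀ q} ∈ 𝓝 p₀ := by
    have hcont : Continuous fun q : ProbabilityMeasure X₂ => (x₀, q) := by fun_prop
    exact hcont.continuousAt.eventually (hl (x₀, p₀) r'' ht)
  obtain ⟨I, η, hη, hI⟩ := nhds_prob_basis p₀ _ hU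
  let T : ProbabilityMeasure X₂ → (I → ℝ) :=
    fun q => fun i : I => ∫ y, (i : X₂ →ᵇ ℝ) y ∂(q : Measure X₂)
  obtain ⟨l, b, h1, h2⟩ := hb_lemma
    {a : (I → ℝ) × ℝ | ∃ q, a.1 = T q ∧ 0 ≤ a.2 ∧ D x₀ q ≤ ENNReal.ofReal a.2}
    (by
      rintro ⟨v1, y1⟩ ⟨q1, e1, hy1, hd1⟩ ⟨v2, y2⟩ ⟨q2, e2, hy2, hd2⟩ u v hu hv huv
      have hv' : v = 1 - u := by linarith
      subst hv'
      dsimp at *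
      refine ⟨mixP q1 q2 u hu (by linarith), ?_, by positivity, ?_⟩
      · subst e1 e2
        ext i
        simp only [T, mixP_int]
        simp
      · refine (hc x₀ q1 q2 _ u hu (by linarith) rfl).trans ?_
        rw [ENNReal.ofReal_add (by positivity) (by positivity), ENNReal.ofReal_mul hu,
          ENNReal.ofReal_mul hv]
        gcongr)
    (T p₀) η r'' 0 hη (by rintro a ⟨q, -, h, -⟩; exact h)
    (by
      rintro ⟨v, y⟩ ⟨q, e, hy, hd⟩ hn
      dsimp at *
      subst e
      have h3 : (r'' : ℝ≥0∞) < D x₀ q := hI q hn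
      have h4 := h3.trans_le hd
      have h5 : (r'' : ℝ≥0∞) = ENNReal.ofReal r'' := by simp
      rw [h5] at h4
      exact (ENNReal.lt_ofReal_iff_toReal_lt (by simp)).1 h4 |>.le.trans' (by simp))
    r' (by exact_mod_cast hrr)
  let φ : X₂ →ᵇ ℝ := ∑ i : I, (l (Pi.single i 1)) • (i : X₂ →ᵇ ℝ) +
    BoundedContinuousFunction.const X₂ b
  have hφ : ∀ q : ProbabilityMeasure X₂, ∫ y, φ y ∂(q : Measure X₂) = l (T q) + b := by
    intro q
    have e : ∀ y, φ y = ∑ i : I, (l (Pi.single i 1)) * (i : X₂ →ᵇ ℝ) y + b := by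
      intro y; simp [φ, BoundedContinuousFunction.coe_sum]
    simp_rw [e]
    rw [integral_add, integral_finset_sum]
    · simp only [integral_const_mul, integral_const, probReal_univ, one_smul]
      congr 1
      conv_rhs => rw [← Finset.univ_sum_single (T q)]
      rw [map_sum]
      refine Finset.sum_congr rfl fun i _ => ?_
      have : (Pi.single i (T q i) : I → ℝ) = (T q i) • Pi.single i 1 := by
        ext j; by_cases h : j = i
        · subst h; simp
        · simp [h]
      rw [this, map_smul, smul_eq_mul, mul_comm]
    · intro i _; exact (BoundedContinuousFunction.integrable _ _).const_mul _
    · exact integrable_finset_sum _ fun i _ =>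
        (BoundedContinuousFunction.integrable _ _).const_mul _
    · exact integrable_const _
  refine ⟨φ, fun q => ?_, by rw [hφ]; exact h2⟩
  rw [hφ]
  rcases eq_or_ne (D x₀ q) ⊤ with e | e
  · simp [e]
  · rw [← ENNReal.ofReal_toReal e]
    exact ENNReal.ofReal_le_ofReal
      (h1 (T q, (D x₀ q).toReal) ⟨q, rfl, ENNReal.toReal_nonneg, by simp [ENNReal.ofReal_toReal e]⟩)

lemma rep_lemma (D : X₁ → ProbabilityMeasure X₂ → ℝ≥0∞)
    (hl : LowerSemicontinuous fun q : X₁ × ProbabilityMeasure X₂ => D q.1 q.2)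
    (hc : DConv D)
    (hZ : ∀ R : ℝ, ∃ Z : Set (ProbabilityMeasure X₂), IsCompact Z ∧
      ∀ x, ∀ q ∉ Z, ENNReal.ofReal R ≤ D x q)
    (x₀ : X₁) (p₀ : ProbabilityMeasure X₂) (t : ℝ≥0∞) (ht : t < D x₀ p₀) :
    ∃ (ρ : X₁ →ᵇ ℝ) (φ : X₂ →ᵇ ℝ), (∀ x (q : ProbabilityMeasure X₂),
      ENNReal.ofReal (ρ x * ∫ y, φ y ∂(q : Measure X₂)) ≤ D x q) ∧
      t < ENNReal.ofReal (ρ x₀ * ∫ y, φ y ∂(p₀ : Measure X₂)) := by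
  obtain ⟨r, hr1, hr2⟩ := ENNReal.lt_iff_exists_nnreal_btwn.1 ht
  obtain ⟨r', hr'1, hr'2⟩ := ENNReal.lt_iff_exists_nnreal_btwn.1 hr2
  obtain ⟨r'', hr''1, hr''2⟩ := ENNReal.lt_iff_exists_nnreal_btwn.1 hr'2
  obtain ⟨φ₀, h1, h2⟩ := rep_hb D hl hc x₀ p₀ r' r'' (by exact_mod_cast hr''1) hr''2
  have hδ : (r : ℝ) < r' := by exact_mod_cast hr'1
  set δ : ℝ := r' - r with hδd
  let φ : X₂ →ᵇ ℝ := φ₀ - BoundedContinuousFunction.const X₂ δ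
  have hφ : ∀ q : ProbabilityMeasure X₂, ∫ y, φ y ∂(q : Measure X₂) =
      ∫ y, φ₀ y ∂(q : Measure X₂) - δ := by
    intro q
    have e : ∀ y, φ y = φ₀ y - δ := fun y => by simp [φ]
    simp_rw [e]
    rw [integral_sub (φ₀.integrable _) (integrable_const _)]; simp
  have hφc : Continuous fun q : ProbabilityMeasure X₂ => ∫ y, φ y ∂(q : Measure X₂) :=
    ProbabilityMeasure.continuous_integral_boundedContinuousFunction φ
  obtain ⟨Z, hZc, hZ'⟩ := hZ ‖φ‖
  let W : Set (X₁ × ProbabilityMeasure X₂) :=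
    {z | ∫ y, φ y ∂(z.2 : Measure X₂) < 0} ∪
      {z | ENNReal.ofReal (∫ y, φ y ∂(z.2 : Measure X₂)) < D z.1 z.2}
  have hW : IsOpen W := by
    refine (isOpen_lt (hφc.comp continuous_snd) continuous_const).union ?_
    exact isOpen_lt_lsc _ _ (ENNReal.continuous_ofReal.comp (hφc.comp continuous_snd)) hl
  have hsub : ({x₀} : Set X₁) ×ˢ Z ⊆ W := by
    rintro ⟨x, q⟩ ⟨hx, -⟩
    have hx' : x = x₀ := hx
    subst hx'
    by_cases hn : ∫ y, φ y ∂(q : Measure X₂) < 0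
    · exact Or.inl hn
    · right
      push Not at hn
      refine lt_of_lt_of_le ?_ (h1 q)
      rw [hφ] at hn ⊢
      exact (ENNReal.ofReal_lt_ofReal_iff (by linarith)).2 (by linarith)
  obtain ⟨u, v, hu, -, hxu, hZv, huv⟩ := generalized_tube_lemma isCompact_singleton hZc hW hsub
  obtain ⟨ε, hε, hball⟩ := Metric.isOpen_iff.1 hu x₀ (hxu rfl)
  let ρ : X₁ →ᵇ ℝ := BoundedContinuousFunction.ofNormedAddCommGroup
    (fun x => max 0 (1 - dist x x₀ / ε)) (by fun_prop) 1 (fun x => by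
      rw [Real.norm_eq_abs, abs_of_nonneg (le_max_left _ _)]
      refine max_le zero_le_one ?_
      have : 0 ≤ dist x x₀ / ε := by positivity
      linarith)
  have hρ : ∀ x, ρ x = max 0 (1 - dist x x₀ / ε) := fun x => rfl
  have hρ0 : ∀ x, 0 ≤ ρ x := fun x => le_max_left _ _
  have hρ1 : ∀ x, ρ x ≤ 1 := fun x => by
    rw [hρ]
    refine max_le zero_le_one ?_
    have : 0 ≤ dist x x₀ / ε := by positivity
    linarith
  refine ⟨ρ, φ, fun x q => ?_, ?_⟩
  · by_cases hxb : x ∈ Metric.ball x₀ ε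
    · rcases le_or_gt (∫ y, φ y ∂(q : Measure X₂)) 0 with hn | hn
      · rw [ENNReal.ofReal_of_nonpos (mul_nonpos_of_nonneg_of_nonpos (hρ0 x) hn)]
        exact zero_le
      · refine (ENNReal.ofReal_le_ofReal (q := ∫ y, φ y ∂(q : Measure X₂)) ?_).trans ?_
        · nlinarith [hρ1 x]
        · by_cases hq : q ∈ Z
          · rcases huv (⟨hball hxb, hZv hq⟩ : (x, q) ∈ u ×ˢ v) with h | h
            · exact absurd h (not_lt.2 hn.le)
            · exact le_of_lt h
          · refine le_trans (ENNReal.ofReal_le_ofReal ?_) (hZ' x q hq)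
            exact (le_abs_self _).trans (φ.norm_integral_le_norm (μ := (q : Measure X₂)))
    · have : ρ x = 0 := by
        rw [hρ]
        refine max_eq_left ?_
        rw [Metric.mem_ball, not_lt] at hxb
        have : 1 ≤ dist x x₀ / ε := by rwa [le_div_iff₀ hε, one_mul]
        linarith
      simp [this]
  · have : ρ x₀ = 1 := by simp [hρ]
    rw [this, one_mul, hφ]
    refine hr1.trans_le ?_
    rw [← ENNReal.ofReal_coe_nnreal]
    exact ENNReal.ofReal_le_ofReal (by linarith)

lemma rep_seq (D : X₁ → ProbabilityMeasure X₂ → ℝ≥0∞)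
    (hl : LowerSemicontinuous fun q : X₁ × ProbabilityMeasure X₂ => D q.1 q.2)
    (hc : DConv D)
    (hZ : ∀ R : ℝ, ∃ Z : Set (ProbabilityMeasure X₂), IsCompact Z ∧
      ∀ x, ∀ q ∉ Z, ENNReal.ofReal R ≤ D x q) :
    ∃ (P : ℕ → (X₁ →ᵇ ℝ) × (X₂ →ᵇ ℝ)), (∀ n x (q : ProbabilityMeasure X₂),
      ENNReal.ofReal ((P n).1 x * ∫ y, (P n).2 y ∂(q : Measure X₂)) ≤ D x q) ∧
      ∀ x (q : ProbabilityMeasure X₂), D x q ≤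
        ⨆ n, ENNReal.ofReal ((P n).1 x * ∫ y, (P n).2 y ∂(q : Measure X₂)) := by
  have hsc := secondCountable_prob X₂
  let 𝓥 : Set ((X₁ →ᵇ ℝ) × (X₂ →ᵇ ℝ)) := {P | ∀ x (q : ProbabilityMeasure X₂),
      ENNReal.ofReal (P.1 x * ∫ y, P.2 y ∂(q : Measure X₂)) ≤ D x q}
  let e : ((X₁ →ᵇ ℝ) × (X₂ →ᵇ ℝ)) → (X₁ × ProbabilityMeasure X₂ → ℝ≥0∞) :=
    fun P z => ENNReal.ofReal (P.1 z.1 * ∫ y, P.2 y ∂(z.2 : Measure X₂))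
  have h0 : (0, 0) ∈ 𝓥 := fun x q => by simp
  obtain ⟨𝓕', hsub, hcount, hlub⟩ := exists_countable_lowerSemicontinuous_isLUB
    (s := fun z : X₁ × ProbabilityMeasure X₂ => D z.1 z.2) (𝓕 := e '' 𝓥)
    (by
      rintro f ⟨P, -, rfl⟩
      refine Continuous.lowerSemicontinuous (ENNReal.continuous_ofReal.comp ?_)
      exact (P.1.continuous.comp continuous_fst).mul
        ((ProbabilityMeasure.continuous_integral_boundedContinuousFunction P.2).comp continuous_snd))
    (by
      constructor
      · rintro f ⟨P, hP, rfl⟩ z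
        exact hP z.1 z.2
      · intro f hf z
        refine le_of_forall_lt fun t ht => ?_
        obtain ⟨ρ, φ, h1, h2⟩ := rep_lemma D hl hc hZ z.1 z.2 t ht
        exact h2.trans_le (hf ⟨(ρ, φ), h1, rfl⟩ z))
  have hc' : (insert (e (0, 0)) 𝓕').Countable := hcount.insert _
  obtain ⟨f, hf⟩ := hc'.exists_eq_range (insert_nonempty _ _)
  have hf2 : ∀ n, ∃ P ∈ 𝓥, e P = f n := by
    intro n
    have : f n ∈ insert (e (0, 0)) 𝓕' := by rw [hf]; exact mem_range_self n
    rcases this with h | h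
    · exact ⟨(0, 0), h0, h.symm⟩
    · exact hsub h
  choose P hP hPf using hf2
  refine ⟨P, fun n => hP n, fun x q => ?_⟩
  have hub : (fun z => ⨆ n, f n z) ∈ upperBounds 𝓕' := by
    intro g hg z
    have : g ∈ range f := by rw [← hf]; exact mem_insert_of_mem _ hg
    obtain ⟨n, rfl⟩ := this
    exact le_iSup (fun n => f n z) n
  have := hlub.2 hub (x, q)
  simp only [← hPf] at this
  exact this

end transport


section transport2
variable {X₁ : Type*} [MetricSpace X₁] [PolishSpace X₁] [MeasurableSpace X₁] [BorelSpace X₁]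
    {X₂ : Type*} [MetricSpace X₂] [PolishSpace X₂] [MeasurableSpace X₂] [BorelSpace X₂]
    [Nonempty X₂]

def cK (γ : Measure (X₁ × X₂)) [IsFiniteMeasure γ] (x : X₁) : ProbabilityMeasure X₂ :=
  ⟨γ.condKernel x, inferInstance⟩

def ID (D : X₁ → ProbabilityMeasure X₂ → ℝ≥0∞) (γ : Measure (X₁ × X₂)) [IsFiniteMeasure γ] :
    ℝ≥0∞ := ∫⁻ x, D x (cK γ x) ∂γ.fst

def TV (D : X₁ → ProbabilityMeasure X₂ → ℝ≥0∞) (ψ : (X₁ × X₂) →ᵇ ℝ) : Prop :=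
  ∀ x (q : ProbabilityMeasure X₂), ENNReal.ofReal (∫ y, ψ (x, y) ∂(q : Measure X₂)) ≤ D x q

lemma ID_ge (D : X₁ → ProbabilityMeasure X₂ → ℝ≥0∞) (γ : Measure (X₁ × X₂)) [IsFiniteMeasure γ]
    (ψ : (X₁ × X₂) →ᵇ ℝ) (h : TV D ψ) : ENNReal.ofReal (∫ z, ψ z ∂γ) ≤ ID D γ := by
  rw [← Measure.integral_condKernel (ψ.integrable γ)]
  refine (ofReal_integral_le' _ _ (ψ.integrable γ).integral_condKernel).trans ?_
  exact lintegral_mono fun x => h x (cK γ x)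

lemma ID_le (D : X₁ → ProbabilityMeasure X₂ → ℝ≥0∞)
    (hl : LowerSemicontinuous fun q : X₁ × ProbabilityMeasure X₂ => D q.1 q.2)
    (hc : DConv D)
    (hZ : ∀ R : ℝ, ∃ Z : Set (ProbabilityMeasure X₂), IsCompact Z ∧
      ∀ x, ∀ q ∉ Z, ENNReal.ofReal R ≤ D x q)
    (γ : Measure (X₁ × X₂)) [IsFiniteMeasure γ] (B : ℝ≥0∞)
    (hB : ∀ ψ : (X₁ × X₂) →ᵇ ℝ, TV D ψ → ENNReal.ofReal (∫ z, ψ z ∂γ) ≤ B) : ID D γ ≤ B := by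
  obtain ⟨P, hP1, hP2⟩ := rep_seq D hl hc hZ
  let G : Set (X₁ → ℝ) := {g | ∃ ψ : (X₁ × X₂) →ᵇ ℝ, TV D ψ ∧
    g = fun x => ∫ y, ψ (x, y) ∂(γ.condKernel x)}
  have hint : ∀ (ψ : (X₁ × X₂) →ᵇ ℝ) (x : X₁) (q : Measure X₂) [IsProbabilityMeasure q],
      Integrable (fun y => ψ (x, y)) q := fun ψ x q _ =>
    (ψ.compContinuous ⟨fun y => (x, y), by fun_prop⟩).integrable q
  let Ψ : ℕ → ((X₁ × X₂) →ᵇ ℝ) := fun n =>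
    (P n).1.compContinuous ⟨Prod.fst, continuous_fst⟩ *
      (P n).2.compContinuous ⟨Prod.snd, continuous_snd⟩
  have hΨ : ∀ n x (q : Measure X₂), ∫ y, Ψ n (x, y) ∂q = (P n).1 x * ∫ y, (P n).2 y ∂q := by
    intro n x q
    rw [← integral_const_mul]
    rfl
  refine sup_lemma γ.fst G ?_ ?_ ?_ ?_ (fun n x => ∫ y, Ψ n (x, y) ∂(γ.condKernel x)) ?_ _ ?_ B ?_
  · rintro g ⟨ψ, -, rfl⟩
    exact (StronglyMeasurable.integral_kernel_prod_right' (κ := γ.condKernel)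
      (f := fun z : X₁ × X₂ => ψ z) ψ.continuous.stronglyMeasurable).measurable
  · rintro g ⟨ψ, -, rfl⟩
    exact (ψ.integrable γ).integral_condKernel
  · rintro g₁ ⟨ψ₁, h₁, rfl⟩ g₂ ⟨ψ₂, h₂, rfl⟩ η hη hη1
    let e : (X₁ × X₂) →ᵇ ℝ := BoundedContinuousFunction.ofNormedAddCommGroup (fun z => η z.1)
      (by fun_prop) 1 (fun x => by
        rw [Real.norm_eq_abs, abs_le]; constructor <;> linarith [(hη1 x.1).1, (hη1 x.1).2])
    have hI : ∀ x (q : Measure X₂) [IsProbabilityMeasure q],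
        ∫ y, (e * ψ₁ + (1 - e) * ψ₂) (x, y) ∂q =
        η x * ∫ y, ψ₁ (x, y) ∂q + (1 - η x) * ∫ y, ψ₂ (x, y) ∂q := by
      intro x q _
      rw [← integral_const_mul, ← integral_const_mul, ← integral_add ((hint ψ₁ x q).const_mul _)
        ((hint ψ₂ x q).const_mul _)]
      rfl
    refine ⟨e * ψ₁ + (1 - e) * ψ₂, fun x q => ?_, ?_⟩
    · rw [hI]
      set a := ∫ y, ψ₁ (x, y) ∂(q : Measure X₂) with ha
      set b := ∫ y, ψ₂ (x, y) ∂(q : Measure X₂) with hb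
      refine le_trans (ENNReal.ofReal_le_ofReal (q := max a b) ?_) ?_
      · have h1 := le_max_left a b
        have h2 := le_max_right a b
        nlinarith [mul_le_mul_of_nonneg_left h1 (hη1 x).1,
          mul_le_mul_of_nonneg_left h2 (sub_nonneg.2 (hη1 x).2)]
      · rcases max_choice a b with e | e <;> rw [e]
        exacts [h₁ x q, h₂ x q]
    · ext x
      rw [hI]
  · exact ⟨0, fun x q => by simp, by simp⟩
  · intro n
    refine ⟨Ψ n, fun x q => ?_, rfl⟩
    rw [hΨ]; exact hP1 n x q
  · refine ae_of_all _ fun x => ?_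
    simp only [hΨ]
    exact hP2 x (cK γ x)
  · rintro g ⟨ψ, hψ, rfl⟩
    rw [Measure.integral_condKernel (ψ.integrable γ)]
    exact hB ψ hψ

lemma ID_lsc (D : X₁ → ProbabilityMeasure X₂ → ℝ≥0∞)
    (hl : LowerSemicontinuous fun q : X₁ × ProbabilityMeasure X₂ => D q.1 q.2)
    (hc : DConv D)
    (hZ : ∀ R : ℝ, ∃ Z : Set (ProbabilityMeasure X₂), IsCompact Z ∧
      ∀ x, ∀ q ∉ Z, ENNReal.ofReal R ≤ D x q) :
    LowerSemicontinuous fun γ : FiniteMeasure (X₁ × X₂) => ID D (γ : Measure (X₁ × X₂)) := by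
  intro γ t ht
  have : ∃ ψ : (X₁ × X₂) →ᵇ ℝ, TV D ψ ∧ t < ENNReal.ofReal (∫ z, ψ z ∂(γ : Measure (X₁ × X₂))) := by
    by_contra hcon
    push Not at hcon
    exact absurd (ID_le D hl hc hZ γ t hcon) (not_le.2 ht)
  obtain ⟨ψ, hψ, hlt⟩ := this
  have hcont : Continuous fun γ : FiniteMeasure (X₁ × X₂) =>
      ENNReal.ofReal (∫ z, ψ z ∂(γ : Measure (X₁ × X₂))) :=
    ENNReal.continuous_ofReal.comp
      (FiniteMeasure.continuous_integral_boundedContinuousFunction ψ)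
  filter_upwards [(isOpen_lt continuous_const hcont).mem_nhds hlt] with γ' hγ'
  exact lt_of_lt_of_le hγ' (ID_ge D γ' ψ hψ)

def TT (K : ℕ → Set X₂) (q : Measure X₂) : ℝ≥0∞ := ∑' n, 2 ^ n * q (K n)ᶜ

lemma prob_open_lsc (U : Set X₂) (hU : IsOpen U) :
    LowerSemicontinuous fun q : ProbabilityMeasure X₂ => (q : Measure X₂) U := by
  rw [lowerSemicontinuous_iff_le_liminf]
  intro q
  exact ProbabilityMeasure.le_liminf_measure_open_of_tendsto tendsto_id hU

lemma TT_lsc (K : ℕ → Set X₂) (hK : ∀ n, IsCompact (K n)) :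
    LowerSemicontinuous fun q : ProbabilityMeasure X₂ => TT K (q : Measure X₂) := by
  refine lowerSemicontinuous_tsum fun n => ?_
  have h := prob_open_lsc (K n)ᶜ (hK n).isClosed.isOpen_compl
  intro q t ht
  have hc : Continuous fun s : ℝ≥0∞ => (2:ℝ≥0∞) ^ n * s :=
    ENNReal.continuous_const_mul (by simp)
  exact (hc.comp_lowerSemicontinuous h (fun a b hab => by gcongr)) q t ht

lemma TT_cpt (K : ℕ → Set X₂) (hK : ∀ n, IsCompact (K n)) (R : ℝ≥0) :
    ∃ Z : Set (ProbabilityMeasure X₂), IsCompact Z ∧ ∀ q ∉ Z, (R : ℝ≥0∞) ≤ TT K (q : Measure X₂) := by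
  refine ⟨{q : ProbabilityMeasure X₂ | ∀ n, q (K n)ᶜ ≤ R * (1/2) ^ n},
    isCompact_setOfPred_probabilityMeasure_mass_eq_compl_isCompact_le ?_ hK (Or.inl inferInstance), ?_⟩
  · have : Tendsto (fun n : ℕ => R * (1/2 : ℝ≥0) ^ n) atTop (𝓝 (R * 0)) :=
      tendsto_const_nhds.mul (NNReal.tendsto_pow_atTop_nhds_zero_of_lt_one (by
        rw [← NNReal.coe_lt_coe]; norm_num))
    simpa using this
  · intro q hq
    simp only [mem_setOf_eq, not_forall, not_le] at hq
    obtain ⟨n, hn⟩ := hq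
    refine le_trans ?_ (ENNReal.le_tsum n)
    have h1 : ((R * (1/2) ^ n : ℝ≥0) : ℝ≥0∞) ≤ (q : Measure X₂) (K n)ᶜ := by
      rw [← ProbabilityMeasure.ennreal_coeFn_eq_coeFn_toMeasure]
      exact_mod_cast hn.le
    refine le_trans (le_of_eq ?_) (mul_le_mul_right h1 _)
    have : (2:ℝ≥0∞) ^ n = ((2 ^ n : ℝ≥0) : ℝ≥0∞) := by push_cast; rfl
    rw [this, ← ENNReal.coe_mul]
    congr 1
    rw [mul_left_comm, ← mul_pow]
    simp

lemma ID_add (D : X₁ → ProbabilityMeasure X₂ → ℝ≥0∞) (K : ℕ → Set X₂)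
    (hK : ∀ n, IsCompact (K n)) (ε : ℝ≥0) (γ : Measure (X₁ × X₂)) [IsFiniteMeasure γ] :
    ID (fun x q => D x q + ε * TT K (q : Measure X₂)) γ = ID D γ + ε * TT K γ.snd := by
  have hm : ∀ n, Measurable fun x => γ.condKernel x (K n)ᶜ := fun n =>
    (ProbabilityTheory.Kernel.measurable_coe _ (hK n).isClosed.measurableSet.compl)
  have e : ∀ x, TT K (cK γ x : Measure X₂) = ∑' n, 2 ^ n * γ.condKernel x (K n)ᶜ := fun x => rfl
  unfold ID
  simp_rw [e]
  have hm2 : Measurable fun x => ∑' n, 2 ^ n * γ.condKernel x (K n)ᶜ :=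
    Measurable.tsum fun n => (hm n).const_mul _
  rw [lintegral_add_right _ (hm2.const_mul _), lintegral_const_mul _ hm2,
    lintegral_tsum fun n => ((hm n).const_mul _).aemeasurable]
  congr 3
  ext n
  rw [lintegral_const_mul _ (hm n)]
  congr 1
  have h2 := Measure.setLIntegral_condKernel_eq_measure_prod (ρ := γ) MeasurableSet.univ
    (hK n).isClosed.measurableSet.compl
  rw [Measure.restrict_univ] at h2
  rw [h2, Measure.snd_apply (hK n).isClosed.measurableSet.compl]
  congr 1
  ext z; simp

lemma ID_lscOn (D : X₁ → ProbabilityMeasure X₂ → ℝ≥0∞)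
    (hl : LowerSemicontinuous fun q : X₁ × ProbabilityMeasure X₂ => D q.1 q.2)
    (hc : DConv D) (K : ℕ → Set X₂) (hK : ∀ n, IsCompact (K n))
    (S : Set (FiniteMeasure (X₁ × X₂))) (c : ℝ≥0)
    (hS : ∀ γ ∈ S, TT K (γ : Measure (X₁ × X₂)).snd ≤ c) :
    LowerSemicontinuousOn (fun γ : FiniteMeasure (X₁ × X₂) => ID D (γ : Measure (X₁ × X₂))) S := by
  have key : ∀ ε : ℝ≥0, 0 < ε → LowerSemicontinuous fun γ : FiniteMeasure (X₁ × X₂) =>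
      ID D (γ : Measure (X₁ × X₂)) + ε * TT K (γ : Measure (X₁ × X₂)).snd := by
    intro ε hε
    simp_rw [← ID_add D K hK ε]
    refine ID_lsc _ ?_ ?_ ?_
    · refine hl.add ?_
      have h1 : LowerSemicontinuous fun q : X₁ × ProbabilityMeasure X₂ =>
          TT K (q.2 : Measure X₂) := (TT_lsc K hK).comp continuous_snd
      exact (ENNReal.continuous_const_mul (a := (ε : ℝ≥0∞)) (by simp)).comp_lowerSemicontinuous h1
        (fun a b hab => by dsimp only; gcongr)
    · intro x p q m t ht0 ht1 hm
      have h1 := hc x p q m t ht0 ht1 hm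
      have h2 : TT K (m : Measure X₂) = ENNReal.ofReal t * TT K (p : Measure X₂) +
          ENNReal.ofReal (1 - t) * TT K (q : Measure X₂) := by
        unfold TT
        rw [hm, ← ENNReal.tsum_mul_left, ← ENNReal.tsum_mul_left, ← ENNReal.tsum_add]
        congr 1; ext n
        simp only [Measure.coe_add, Measure.coe_smul, Pi.add_apply, Pi.smul_apply, smul_eq_mul]
        ring
      dsimp only
      rw [h2]
      refine (add_le_add_left h1 _).trans (le_of_eq ?_)
      ring
    · intro R
      obtain ⟨Z, hZ1, hZ2⟩ := TT_cpt K hK (R.toNNReal / ε)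
      refine ⟨Z, hZ1, fun x q hq => ?_⟩
      refine le_trans ?_ le_add_self
      refine le_trans (le_of_eq ?_) (mul_le_mul_right (hZ2 q hq) _)
      rw [← ENNReal.coe_mul, mul_div_cancel₀ _ hε.ne']
      rfl
  intro γ hγ t ht
  obtain ⟨r, hr1, hr2⟩ := ENNReal.lt_iff_exists_nnreal_btwn.1 ht
  have htt : t ≠ ⊤ := (hr1.trans ENNReal.coe_lt_top).ne
  lift t to ℝ≥0 using htt
  have hr1' : t < r := by exact_mod_cast hr1
  set ε : ℝ≥0 := (r - t) / (c + 1) with hε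
  have hε0 : 0 < ε := div_pos (tsub_pos_of_lt hr1') (by positivity)
  have h1 := key ε hε0 γ r (hr2.trans_le le_self_add)
  filter_upwards [nhdsWithin_le_nhds h1, self_mem_nhdsWithin] with γ' h2 h3
  have h4 : (ε : ℝ≥0∞) * TT K (γ' : Measure (X₁ × X₂)).snd ≤ ((r - t : ℝ≥0) : ℝ≥0∞) := by
    refine (mul_le_mul_right (hS γ' h3) _).trans ?_
    rw [← ENNReal.coe_mul]
    norm_cast
    rw [hε, div_mul_eq_mul_div, div_le_iff₀ (by positivity)]
    gcongr
    simp
  have h5 : (r : ℝ≥0∞) = t + ((r - t : ℝ≥0) : ℝ≥0∞) := by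
    rw [← ENNReal.coe_add, add_tsub_cancel_of_le hr1'.le]
  by_contra hcon
  push Not at hcon
  have : ID D (γ' : Measure (X₁ × X₂)) + ε * TT K (γ' : Measure (X₁ × X₂)).snd ≤ r := by
    rw [h5]; exact add_le_add hcon h4
  exact absurd h2 (not_lt.2 this)

end transport2


section costpart
variable {X₁ : Type*} [MetricSpace X₁] [PolishSpace X₁] [MeasurableSpace X₁] [BorelSpace X₁]
    {X₂ : Type*} [MetricSpace X₂] [PolishSpace X₂] [MeasurableSpace X₂] [BorelSpace X₂]

lemma posE_eq (a : EReal) : posE a = a.toENNReal := rfl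

lemma posE_ident (c : EReal) (κ : ℝ) (h : (κ : EReal) ≤ c) :
    posE c + ENNReal.ofReal (-κ) = posE (-c) + (ENNReal.ofReal κ + (c - κ).toENNReal) := by
  induction c using EReal.rec with
  | bot => simp at h
  | top => simp [posE]
  | coe c =>
    have h' : κ ≤ c := by exact_mod_cast h
    have e1 : posE (c : EReal) = ENNReal.ofReal c := by simp [posE]
    have e2 : posE (-(c : EReal)) = ENNReal.ofReal (-c) := by
      rw [← EReal.coe_neg]; simp [posE]
    have e3 : ((c : EReal) - κ).toENNReal = ENNReal.ofReal (c - κ) := by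
      rw [← EReal.coe_sub, EReal.toENNReal_of_ne_top (EReal.coe_ne_top _), EReal.toReal_coe]
    rw [e1, e2, e3]
    rcases le_total 0 c with hc | hc <;> rcases le_total 0 κ with hk | hk
    · rw [ENNReal.ofReal_of_nonpos (by linarith : -κ ≤ 0), ENNReal.ofReal_of_nonpos (by linarith : -c ≤ 0),
        ← ENNReal.ofReal_add hk (by linarith)]
      simp
    · rw [ENNReal.ofReal_of_nonpos (by linarith : -c ≤ 0), ENNReal.ofReal_of_nonpos hk,
        ← ENNReal.ofReal_add hc (by linarith)]
      simp [sub_eq_add_neg]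
    · have : c = 0 := by linarith
      have : κ = 0 := by linarith
      simp_all
    · rw [ENNReal.ofReal_of_nonpos hc, ENNReal.ofReal_of_nonpos hk, zero_add, zero_add,
        ← ENNReal.ofReal_add (by linarith) (by linarith)]
      congr 1; ring

variable [Nonempty X₂]

def DK (C : X₁ → ProbabilityMeasure X₂ → EReal) (κ : ℝ) : X₁ → ProbabilityMeasure X₂ → ℝ≥0∞ :=
  fun x p => (C x p - κ).toENNReal

lemma DK_lsc (C : X₁ → ProbabilityMeasure X₂ → EReal)
    (hClsc : LowerSemicontinuous fun q : X₁ × ProbabilityMeasure X₂ => C q.1 q.2) (κ : ℝ) :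
    LowerSemicontinuous fun q : X₁ × ProbabilityMeasure X₂ => DK C κ q.1 q.2 := by
  have hcont : Continuous fun c : EReal => (c - κ).toENNReal := by
    refine EReal.continuous_toENNReal.comp ?_
    rw [continuous_iff_continuousAt]
    intro c
    have : (fun c : EReal => c - κ) = fun c : EReal => c + ((-κ : ℝ) : EReal) := by
      ext c; rw [EReal.coe_neg]; rfl
    rw [this]
    exact (EReal.continuousAt_add (p := (c, ((-κ : ℝ) : EReal))) (Or.inr (EReal.coe_ne_bot _))
      (Or.inr (EReal.coe_ne_top _))).comp (f := fun c : EReal => (c, ((-κ : ℝ) : EReal)))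
      (by fun_prop)
  exact hcont.comp_lowerSemicontinuous hClsc
    (fun a b hab => EReal.toENNReal_le_toENNReal (EReal.sub_le_sub hab le_rfl))

lemma DK_conv (C : X₁ → ProbabilityMeasure X₂ → EReal)
    (hCconv : ∀ (x : X₁) (p q m : ProbabilityMeasure X₂) (t : ℝ), 0 ≤ t → t ≤ 1 →
      (m : Measure X₂) = ENNReal.ofReal t • (p : Measure X₂)
          + ENNReal.ofReal (1 - t) • (q : Measure X₂) →
      C x m ≤ (t : EReal) * C x p + ((1 - t : ℝ) : EReal) * C x q)
    (κ : ℝ) (hκ : ∀ x p, (κ : EReal) ≤ C x p) : DConv (DK C κ) := by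
  intro x p q m t ht0 ht1 hm
  have h := hCconv x p q m t ht0 ht1 hm
  have key : ∀ a b c : EReal, (κ : EReal) ≤ a → (κ : EReal) ≤ b → (κ : EReal) ≤ c →
      c ≤ (t : EReal) * a + ((1 - t : ℝ) : EReal) * b →
      (c - κ).toENNReal ≤ ENNReal.ofReal t * (a - κ).toENNReal +
        ENNReal.ofReal (1 - t) * (b - κ).toENNReal := by
    intro a b c ha hb hc habc
    rcases ht0.eq_or_lt with rfl | ht0'
    · simp at habc ⊢
      exact EReal.toENNReal_le_toENNReal (EReal.sub_le_sub habc le_rfl)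
    rcases ht1.eq_or_lt with rfl | ht1'
    · simp at habc ⊢
      exact EReal.toENNReal_le_toENNReal (EReal.sub_le_sub habc le_rfl)
    induction a using EReal.rec with
    | bot => simp at ha
    | top =>
      have : ENNReal.ofReal t * ((⊤ : EReal) - κ).toENNReal = ⊤ := by
        simp [ENNReal.mul_top, ht0']
      rw [this]; simp
    | coe a =>
    induction b using EReal.rec with
    | bot => simp at hb
    | top =>
      have : ENNReal.ofReal (1 - t) * ((⊤ : EReal) - κ).toENNReal = ⊤ := by
        simp [ENNReal.mul_top, ht1']
      rw [this]; simp
    | coe b =>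
    induction c using EReal.rec with
    | bot => simp at hc
    | top =>
      norm_cast at habc
    | coe c =>
      norm_cast at habc ha hb hc
      simp only [← EReal.coe_sub, EReal.toENNReal_of_ne_top (EReal.coe_ne_top _), EReal.toReal_coe]
      rw [← ENNReal.ofReal_mul ht0, ← ENNReal.ofReal_mul (by linarith),
        ← ENNReal.ofReal_add (mul_nonneg ht0 (by linarith))
          (mul_nonneg (by linarith) (by linarith))]
      exact ENNReal.ofReal_le_ofReal (by linarith)
  exact key _ _ _ (hκ x p) (hκ x q) (hκ x m) h

lemma eInt_eq (C : X₁ → ProbabilityMeasure X₂ → EReal)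
    (hClsc : LowerSemicontinuous fun q : X₁ × ProbabilityMeasure X₂ => C q.1 q.2)
    (κ : ℝ) (hκ : ∀ x p, (κ : EReal) ≤ C x p) (γ : Measure (X₁ × X₂)) [IsFiniteMeasure γ] :
    eIntegral γ.fst (fun x => C x (cK γ x)) =
      ((ID (DK C κ) γ : ℝ≥0∞) : EReal) + ((κ * γ.real univ : ℝ) : EReal) := by
  have hsc := secondCountable_prob X₂
  let _ : MeasurableSpace (ProbabilityMeasure X₂) := borel _
  have _ : BorelSpace (ProbabilityMeasure X₂) := ⟨rfl⟩
  have hm : Measurable fun x => C x (cK γ x) := by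
    have h1 : Measurable fun q : X₁ × ProbabilityMeasure X₂ => C q.1 q.2 := hClsc.measurable
    have h2 : Measurable fun x => cK γ x := measurable_of_kernel γ.condKernel
    exact h1.comp (measurable_id.prodMk h2)
  have hm1 : Measurable fun x => posE (-(C x (cK γ x))) :=
    measurable_ereal_toENNReal.comp hm.neg
  have hu : γ.fst univ = γ univ := Measure.fst_univ
  have hA : ∫⁻ x, posE (C x (cK γ x)) ∂γ.fst + ENNReal.ofReal (-κ) * γ univ =
      ∫⁻ x, posE (-(C x (cK γ x))) ∂γ.fst + (ENNReal.ofReal κ * γ univ + ID (DK C κ) γ) := by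
    rw [← hu, ← lintegral_const, ← lintegral_const, ← lintegral_add_right _ measurable_const, ID,
      ← lintegral_add_left measurable_const, ← lintegral_add_left hm1]
    exact lintegral_congr fun x => posE_ident _ κ (hκ _ _)
  have hN : ∫⁻ x, posE (-(C x (cK γ x))) ∂γ.fst ≠ ⊤ := by
    have : ∫⁻ x, posE (-(C x (cK γ x))) ∂γ.fst ≤ ∫⁻ x, ENNReal.ofReal (-κ) ∂γ.fst := by
      refine lintegral_mono fun x => ?_
      have := EReal.toENNReal_le_toENNReal (EReal.neg_le_neg_iff.2 (hκ x (cK γ x)))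
      rw [posE_eq]
      refine this.trans (le_of_eq ?_)
      rw [← EReal.coe_neg, EReal.toENNReal_of_ne_top (EReal.coe_ne_top _), EReal.toReal_coe]
    refine ne_top_of_le_ne_top ?_ this
    rw [lintegral_const]
    exact ENNReal.mul_ne_top ENNReal.ofReal_ne_top (measure_ne_top _ _)
  unfold eIntegral
  generalize ∫⁻ x, posE (C x (cK γ x)) ∂γ.fst = P at *
  generalize ∫⁻ x, posE (-(C x (cK γ x))) ∂γ.fst = N at *
  generalize ID (DK C κ) γ = J at *
  have hmass : γ univ = ENNReal.ofReal (γ.real univ) := by simp [Measure.real]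
  have hm0 : 0 ≤ γ.real univ := measureReal_nonneg
  rw [hmass, ← ENNReal.ofReal_mul' hm0, ← ENNReal.ofReal_mul' hm0] at hA
  generalize γ.real univ = w at *
  lift N to ℝ≥0 using hN
  rcases eq_or_ne J ⊤ with hJ | hJ
  · have hP : P = ⊤ := by
      rw [hJ] at hA
      simp at hA
      exact hA
    rw [hJ, hP, EReal.coe_ennreal_top, EReal.top_add_coe]
    exact EReal.top_sub_coe (N : ℝ)
  · have hP : P ≠ ⊤ := by
      intro hP
      rw [hP] at hA
      simp only [top_add] at hA
      exact absurd hA.symm (by simp [hJ])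
    lift P to ℝ≥0 using hP
    lift J to ℝ≥0 using hJ
    have hr := congrArg ENNReal.toReal hA
    rw [ENNReal.toReal_add (by simp) (by simp), ENNReal.toReal_add (by simp) (by simp),
      ENNReal.toReal_add (by simp) (by simp)] at hr
    simp only [ENNReal.coe_toReal, ENNReal.toReal_ofReal'] at hr
    have hkw : max (κ * w) 0 - max (-κ * w) 0 = κ * w := by
      rw [neg_mul]
      rcases le_total 0 (κ * w) with h | h
      · rw [max_eq_left h, max_eq_right (by linarith)]; ring
      · rw [max_eq_right h, max_eq_left (by linarith)]; ring
    have e1 : ∀ a : ℝ≥0, (((a : ℝ≥0∞)) : EReal) = ((a : ℝ) : EReal) := fun a => rfl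
    rw [e1, e1, e1, ← EReal.coe_sub, ← EReal.coe_add]
    congr 1
    linarith

lemma wCost_eq (C : X₁ → ProbabilityMeasure X₂ → EReal)
    (hClsc : LowerSemicontinuous fun q : X₁ × ProbabilityMeasure X₂ => C q.1 q.2)
    (κ : ℝ) (hκ : ∀ x p, (κ : EReal) ≤ C x p) (F₁ F₂ : EntropyFn)
    (μ₁ : Measure X₁) (μ₂ : Measure X₂) (γ : Measure (X₁ × X₂)) [hγ : IsFiniteMeasure γ] :
    wCost C F₁ F₂ μ₁ μ₂ γ hγ =
      ((entF F₁ γ.fst μ₁ + entF F₂ γ.snd μ₂ + ID (DK C κ) γ : ℝ≥0∞) : EReal) +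
        ((κ * γ.real univ : ℝ) : EReal) := by
  have := eInt_eq C hClsc κ hκ γ
  change _ + _ + eIntegral γ.fst (fun x => C x (cK γ x)) = _
  rw [this, ← add_assoc, EReal.coe_ennreal_add, EReal.coe_ennreal_add]

end costpart


def Good (F : EntropyFn) (a b : ℝ) : Prop := 0 ≤ b ∧
  ∀ s, 0 ≤ s → ENNReal.ofReal (a * s) ≤ F.F s + ENNReal.ofReal b

lemma good_of (F : EntropyFn) (a : ℝ) (ha : 0 ≤ a) (h : a = 0 ∨ ENNReal.ofReal a < F.recC) :
    ∃ b, Good F a b := by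
  rcases h with rfl | h
  · exact ⟨0, le_rfl, fun s _ => by simp⟩
  · exact ent_affine F a ha h

lemma tight_fam {X : Type*} [MetricSpace X] [PolishSpace X] [MeasurableSpace X] [BorelSpace X]
    (F : EntropyFn) (hF : F.Superlinear) (μ : Measure X) [IsFiniteMeasure μ] (c : ℝ≥0) (ε : ℝ≥0)
    (hε : 0 < ε) : ∃ K : Set X, IsCompact K ∧ ∀ γ : Measure X, IsFiniteMeasure γ →
      entF F γ μ ≤ c → γ Kᶜ ≤ ε := by
  set a : ℝ≥0 := (c + 1) / ε with ha
  have ha0 : 0 < a := by positivity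
  obtain ⟨b, hb, h⟩ := good_of F a a.2 (Or.inr (by
    rw [show F.recC = ⊤ from hF]; exact ENNReal.ofReal_lt_top))
  have ht := isTightMeasureSet_iff_exists_isCompact_measure_compl_le.1
    (isTightMeasureSet_singleton (μ := μ))
  obtain ⟨K, hK, hK2⟩ := ht (ENNReal.ofReal (1 / (b + 1))) (by
    rw [ENNReal.ofReal_pos]; positivity)
  refine ⟨K, hK, fun γ hγ hent => ?_⟩
  have h1 := ent_coer F γ μ a b hb h Kᶜ hK.isClosed.measurableSet.compl
  have h2 := hK2 μ rfl
  have h3 : ENNReal.ofReal b * μ Kᶜ ≤ 1 := by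
    refine (mul_le_mul_right h2 _).trans ?_
    rw [← ENNReal.ofReal_mul hb]
    refine ENNReal.ofReal_le_one.2 ?_
    rw [mul_one_div, div_le_one (by positivity)]; linarith
  have h4 : (a : ℝ≥0∞) * γ Kᶜ ≤ a * ε := by
    rw [← ENNReal.ofReal_coe_nnreal (p := a)]
    refine (h1.trans (add_le_add hent h3)).trans (le_of_eq ?_)
    rw [ENNReal.ofReal_coe_nnreal, ← ENNReal.coe_mul, ha, div_mul_cancel₀ _ hε.ne']
    push_cast; rfl
  exact (ENNReal.mul_le_mul_iff_right (by exact_mod_cast ha0.ne') (by simp)).1 h4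

lemma exists_coefs (F₁ F₂ : EntropyFn) (κ : ℝ)
    (h : (0 : EReal) < ((F₁.recC : ℝ≥0∞) : EReal) + ((F₂.recC : ℝ≥0∞) : EReal) + (κ : EReal)) :
    ∃ a₁ a₂ b₁ b₂ : ℝ, Good F₁ a₁ b₁ ∧ Good F₂ a₂ b₂ ∧ 0 < a₁ + a₂ + κ := by
  suffices H : ∃ a₁ a₂ : ℝ, 0 ≤ a₁ ∧ 0 ≤ a₂ ∧ (a₁ = 0 ∨ ENNReal.ofReal a₁ < F₁.recC) ∧
      (a₂ = 0 ∨ ENNReal.ofReal a₂ < F₂.recC) ∧ 0 < a₁ + a₂ + κ by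
    obtain ⟨a₁, a₂, h1, h2, h3, h4, h5⟩ := H
    obtain ⟨b₁, hb₁⟩ := good_of F₁ a₁ h1 h3
    obtain ⟨b₂, hb₂⟩ := good_of F₂ a₂ h2 h4
    exact ⟨a₁, a₂, b₁, b₂, hb₁, hb₂, h5⟩
  generalize F₁.recC = r1 at *
  generalize F₂.recC = r2 at *
  rcases eq_or_ne r1 ⊤ with e1 | e1
  · refine ⟨|κ| + 1, 0, by positivity, le_rfl, Or.inr (by rw [e1]; exact ENNReal.ofReal_lt_top),
      Or.inl rfl, ?_⟩
    linarith [neg_abs_le κ]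
  rcases eq_or_ne r2 ⊤ with e2 | e2
  · refine ⟨0, |κ| + 1, le_rfl, by positivity, Or.inl rfl,
      Or.inr (by rw [e2]; exact ENNReal.ofReal_lt_top), ?_⟩
    linarith [neg_abs_le κ]
  lift r1 to ℝ≥0 using e1
  lift r2 to ℝ≥0 using e2
  have h' : 0 < (r1 : ℝ) + r2 + κ := by
    have e1 : ∀ a : ℝ≥0, (((a : ℝ≥0∞)) : EReal) = ((a : ℝ) : EReal) := fun a => rfl
    rw [e1, e1] at h
    exact_mod_cast h
  set d := ((r1 : ℝ) + r2 + κ) / 3 with hd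
  have hd0 : 0 < d := by positivity
  have key : ∀ r : ℝ≥0, (max 0 ((r : ℝ) - d) = 0 ∨ ENNReal.ofReal (max 0 ((r : ℝ) - d)) < r) := by
    intro r
    rcases le_or_gt ((r : ℝ) - d) 0 with h | h
    · left; exact max_eq_left h
    · right
      rw [max_eq_right h.le, ENNReal.ofReal_lt_iff_lt_toReal h.le (by simp)]
      simp; exact hd0
  refine ⟨max 0 (r1 - d), max 0 (r2 - d), le_max_left _ _, le_max_left _ _, key _, key _, ?_⟩
  have := le_max_right 0 ((r1 : ℝ) - d)
  have := le_max_right 0 ((r2 : ℝ) - d)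
  linarith


section final
variable {X₁ : Type*} [MetricSpace X₁] [PolishSpace X₁] [MeasurableSpace X₁] [BorelSpace X₁]
    {X₂ : Type*} [MetricSpace X₂] [PolishSpace X₂] [MeasurableSpace X₂] [BorelSpace X₂]
    [Nonempty X₂]

lemma good_real {X : Type*} [MeasurableSpace X] (F : EntropyFn) (γ μ : Measure X)
    [IsFiniteMeasure γ] [IsFiniteMeasure μ] (a b : ℝ) (h : Good F a b) (hE : entF F γ μ ≠ ⊤) :
    a * γ.real univ ≤ (entF F γ μ).toReal + b * μ.real univ := by
  have h1 := ent_coer F γ μ a b h.1 h.2 univ MeasurableSet.univ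
  have h2 := ENNReal.toReal_mono (ENNReal.add_ne_top.2
    ⟨hE, ENNReal.mul_ne_top ENNReal.ofReal_ne_top (measure_ne_top _ _)⟩) h1
  rw [ENNReal.toReal_add hE (ENNReal.mul_ne_top ENNReal.ofReal_ne_top (measure_ne_top _ _)),
    ENNReal.toReal_mul, ENNReal.toReal_mul, ENNReal.toReal_ofReal h.1] at h2
  refine le_trans ?_ h2
  refine mul_le_mul_of_nonneg_right ?_ ENNReal.toReal_nonneg
  rw [ENNReal.toReal_ofReal']
  exact le_max_left _ _

lemma exists_min (C : X₁ → ProbabilityMeasure X₂ → EReal)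
    (hClsc : LowerSemicontinuous fun q : X₁ × ProbabilityMeasure X₂ => C q.1 q.2)
    (hCconv : ∀ (x : X₁) (p q m : ProbabilityMeasure X₂) (t : ℝ), 0 ≤ t → t ≤ 1 →
      (m : Measure X₂) = ENNReal.ofReal t • (p : Measure X₂)
          + ENNReal.ofReal (1 - t) • (q : Measure X₂) →
      C x m ≤ (t : EReal) * C x p + ((1 - t : ℝ) : EReal) * C x q)
    (F₁ F₂ : EntropyFn)
    (μ₁ : Measure X₁) (μ₂ : Measure X₂) [IsFiniteMeasure μ₁] [IsFiniteMeasure μ₂]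
    (hfeas : ∃ (γ : Measure (X₁ × X₂)) (hγ : IsFiniteMeasure γ),
      wCost C F₁ F₂ μ₁ μ₂ γ hγ < ⊤)
    (κ : ℝ) (hκ : ∀ x p, (κ : EReal) ≤ C x p)
    (a₁ a₂ b₁ b₂ : ℝ) (hg₁ : Good F₁ a₁ b₁) (hg₂ : Good F₂ a₂ b₂) (hpos : 0 < a₁ + a₂ + κ)
    (htight : ∀ c ε : ℝ≥0, 0 < ε → ∃ (K : Set X₁) (K' : Set X₂), IsCompact K ∧ IsCompact K' ∧
      ∀ γ : Measure (X₁ × X₂), IsFiniteMeasure γ → entF F₁ γ.fst μ₁ ≤ c → entF F₂ γ.snd μ₂ ≤ c →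
        γ.fst Kᶜ ≤ ε ∧ γ.snd K'ᶜ ≤ ε) :
    ∃ (γ : Measure (X₁ × X₂)) (hγ : IsFiniteMeasure γ),
      wCost C F₁ F₂ μ₁ μ₂ γ hγ = wOpt C F₁ F₂ μ₁ μ₂ := by
  obtain ⟨γ₀, hγ₀, hfin⟩ := hfeas
  let E : FiniteMeasure (X₁ × X₂) → ℝ≥0∞ := fun γ =>
    entF F₁ (γ : Measure (X₁ × X₂)).fst μ₁ + entF F₂ (γ : Measure (X₁ × X₂)).snd μ₂ +
      ID (DK C κ) (γ : Measure (X₁ × X₂))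
  let cost : FiniteMeasure (X₁ × X₂) → EReal := fun γ =>
    (E γ : EReal) + ((κ * (γ : Measure (X₁ × X₂)).real univ : ℝ) : EReal)
  have hcost : ∀ γ : FiniteMeasure (X₁ × X₂),
      wCost C F₁ F₂ μ₁ μ₂ (γ : Measure (X₁ × X₂)) inferInstance = cost γ := fun γ =>
    wCost_eq C hClsc κ hκ F₁ F₂ μ₁ μ₂ (γ : Measure (X₁ × X₂))
  let g₀ : FiniteMeasure (X₁ × X₂) := ⟨γ₀, hγ₀⟩
  have hg0 : cost g₀ < ⊤ := by rw [← hcost]; exact hfin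
  have hreal : ∀ γ, cost γ < ⊤ → E γ ≠ ⊤ ∧
      cost γ = (((E γ).toReal + κ * (γ : Measure (X₁ × X₂)).real univ : ℝ) : EReal) := by
    intro γ hγ
    have hE : E γ ≠ ⊤ := by
      intro hE
      simp only [cost, hE, EReal.coe_ennreal_top, EReal.top_add_coe] at hγ
      exact lt_irrefl _ hγ
    refine ⟨hE, ?_⟩
    simp only [cost]
    rw [EReal.coe_add, EReal.coe_ennreal_toReal hE]
  obtain ⟨c, hc⟩ : ∃ c : ℝ, cost g₀ = c := ⟨_, (hreal g₀ hg0).2⟩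
  -- bounds
  set B : ℝ := c + b₁ * μ₁.real univ + b₂ * μ₂.real univ with hBdef
  set M : ℝ := max 0 (B / (a₁ + a₂ + κ)) with hM
  set c' : ℝ≥0 := (c + |κ| * M).toNNReal with hc'
  have hbound : ∀ γ, cost γ ≤ c → (γ : Measure (X₁ × X₂)).real univ ≤ M ∧
      entF F₁ (γ : Measure (X₁ × X₂)).fst μ₁ ≤ c' ∧
      entF F₂ (γ : Measure (X₁ × X₂)).snd μ₂ ≤ c' := by
    intro γ hγ
    obtain ⟨hE, he⟩ := hreal γ (hγ.trans_lt (EReal.coe_lt_top c))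
    rw [he] at hγ
    have hγ' : (E γ).toReal + κ * (γ : Measure (X₁ × X₂)).real univ ≤ c := by exact_mod_cast hγ
    have hE12 := (ENNReal.add_ne_top.1 hE).1
    have hE1 := (ENNReal.add_ne_top.1 hE12).1
    have hE2 := (ENNReal.add_ne_top.1 hE12).2
    have hEJ := (ENNReal.add_ne_top.1 hE).2
    have hsum : (E γ).toReal = (entF F₁ (γ : Measure (X₁ × X₂)).fst μ₁).toReal +
        (entF F₂ (γ : Measure (X₁ × X₂)).snd μ₂).toReal +
        (ID (DK C κ) (γ : Measure (X₁ × X₂))).toReal := by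
      rw [ENNReal.toReal_add hE12 hEJ, ENNReal.toReal_add hE1 hE2]
    have h1 := good_real F₁ (γ : Measure (X₁ × X₂)).fst μ₁ a₁ b₁ hg₁ hE1
    have h2 := good_real F₂ (γ : Measure (X₁ × X₂)).snd μ₂ a₂ b₂ hg₂ hE2
    have e1 : (γ : Measure (X₁ × X₂)).fst.real univ = (γ : Measure (X₁ × X₂)).real univ := by
      simp only [Measure.real, Measure.fst_univ]
    have e2 : (γ : Measure (X₁ × X₂)).snd.real univ = (γ : Measure (X₁ × X₂)).real univ := by
      simp only [Measure.real, Measure.snd_univ]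
    rw [e1] at h1
    rw [e2] at h2
    have hm0 : 0 ≤ (γ : Measure (X₁ × X₂)).real univ := measureReal_nonneg
    have hn1 : 0 ≤ (entF F₁ (γ : Measure (X₁ × X₂)).fst μ₁).toReal := ENNReal.toReal_nonneg
    have hn2 : 0 ≤ (entF F₂ (γ : Measure (X₁ × X₂)).snd μ₂).toReal := ENNReal.toReal_nonneg
    have hnJ : 0 ≤ (ID (DK C κ) (γ : Measure (X₁ × X₂))).toReal := ENNReal.toReal_nonneg
    have hmM : (γ : Measure (X₁ × X₂)).real univ ≤ M := by
      refine le_trans ?_ (le_max_right _ _)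
      rw [le_div_iff₀ hpos]
      nlinarith
    have hκM : -(|κ| * M) ≤ κ * (γ : Measure (X₁ × X₂)).real univ := by
      have h3 : |κ| * (γ : Measure (X₁ × X₂)).real univ ≤ |κ| * M :=
        mul_le_mul_of_nonneg_left hmM (abs_nonneg _)
      nlinarith [neg_abs_le κ, mul_le_mul_of_nonneg_right (neg_abs_le κ) hm0]
    refine ⟨hmM, ?_, ?_⟩
    · rw [← ENNReal.ofReal_toReal hE1]
      exact ENNReal.ofReal_le_ofReal (by linarith)
    · rw [← ENNReal.ofReal_toReal hE2]
      exact ENNReal.ofReal_le_ofReal (by linarith)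
  -- compact set
  choose K K' hK hK' hKK using fun n : ℕ => htight c' ((1/4) ^ n) (by positivity)
  set u : ℕ → ℝ≥0 := fun n => 2 * (1/4) ^ n with hu
  have hut : Tendsto u atTop (𝓝 0) := by
    have : Tendsto (fun n : ℕ => (2 : ℝ≥0) * (1/4 : ℝ≥0) ^ n) atTop (𝓝 (2 * 0)) :=
      tendsto_const_nhds.mul (NNReal.tendsto_pow_atTop_nhds_zero_of_lt_one (by
        rw [← NNReal.coe_lt_coe]; norm_num))
    rw [mul_zero] at this; exact this
  set S : Set (FiniteMeasure (X₁ × X₂)) :=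
    {γ | γ.mass ≤ M.toNNReal ∧ ∀ n, γ (K n ×ˢ K' n)ᶜ ≤ u n} with hS
  have hScomp : IsCompact S :=
    isCompact_setOfPred_finiteMeasure_mass_le_compl_isCompact_le M.toNNReal hut
      (fun n => (hK n).prod (hK' n)) (Or.inl inferInstance)
  have hSsub : ∀ γ, cost γ ≤ c → γ ∈ S := by
    intro γ hγ
    obtain ⟨h1, h2, h3⟩ := hbound γ hγ
    refine ⟨?_, fun n => ?_⟩
    · refine NNReal.le_toNNReal_of_coe_le ?_
      exact h1
    · obtain ⟨h4, h5⟩ := hKK n γ inferInstance h2 h3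
      have h6 : (γ : Measure (X₁ × X₂)) (K n ×ˢ K' n)ᶜ ≤ (u n : ℝ≥0∞) := by
        have hsub : (K n ×ˢ K' n)ᶜ ⊆ Prod.fst ⁻¹' (K n)ᶜ ∪ Prod.snd ⁻¹' (K' n)ᶜ := by
          rintro ⟨x, y⟩ h
          by_contra hcon
          simp only [mem_union, mem_preimage, mem_compl_iff, not_or, not_not] at hcon
          exact h hcon
        refine (measure_mono hsub).trans ((measure_union_le _ _).trans ?_)
        rw [Measure.fst_apply (hK n).isClosed.measurableSet.compl] at h4
        rw [Measure.snd_apply (hK' n).isClosed.measurableSet.compl] at h5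
        refine (add_le_add h4 h5).trans (le_of_eq ?_)
        rw [← ENNReal.coe_add, hu]
        congr 1; ring
      rw [← FiniteMeasure.ennreal_coeFn_eq_coeFn_toMeasure] at h6
      exact_mod_cast h6
  have hTT : ∀ γ ∈ S, TT K' (γ : Measure (X₁ × X₂)).snd ≤ (4 : ℝ≥0) := by
    rintro γ ⟨-, hγ⟩
    have h1 : ∀ n, (2:ℝ≥0∞) ^ n * (γ : Measure (X₁ × X₂)).snd (K' n)ᶜ ≤
        ((2 * (1/2) ^ n : ℝ≥0) : ℝ≥0∞) := by
      intro n
      have h2 : (γ : Measure (X₁ × X₂)).snd (K' n)ᶜ ≤ (u n : ℝ≥0∞) := by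
        rw [Measure.snd_apply (hK' n).isClosed.measurableSet.compl]
        refine (measure_mono (t := (K n ×ˢ K' n)ᶜ) ?_).trans ?_
        · rintro ⟨x, y⟩ h h'
          exact h h'.2
        · rw [← FiniteMeasure.ennreal_coeFn_eq_coeFn_toMeasure]
          exact_mod_cast hγ n
      refine (mul_le_mul_right h2 _).trans (le_of_eq ?_)
      have : (2:ℝ≥0∞) ^ n = ((2 ^ n : ℝ≥0) : ℝ≥0∞) := by push_cast; rfl
      rw [this, ← ENNReal.coe_mul, hu]
      congr 1
      simp only
      rw [mul_left_comm, ← mul_pow]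
      congr 2
      rw [← NNReal.coe_inj]; norm_num
    refine (ENNReal.tsum_le_tsum h1).trans (le_of_eq ?_)
    have hs : HasSum (fun n : ℕ => (2 * (1/2) ^ n : ℝ≥0)) (2 * 2) := by
      refine HasSum.mul_left 2 ?_
      rw [← NNReal.hasSum_coe]
      push_cast
      exact hasSum_geometric_two
    have := (ENNReal.hasSum_coe.2 hs).tsum_eq
    rw [this]
    norm_num
  have hlsc : LowerSemicontinuousOn cost S := by
    have h1 : LowerSemicontinuous fun γ : FiniteMeasure (X₁ × X₂) =>
        entF F₁ (γ : Measure (X₁ × X₂)).fst μ₁ :=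
      (ent_lsc F₁ μ₁).comp (g := fun γ : FiniteMeasure (X₁ × X₂) => γ.map Prod.fst)
        (FiniteMeasure.continuous_map continuous_fst)
    have h2 : LowerSemicontinuous fun γ : FiniteMeasure (X₁ × X₂) =>
        entF F₂ (γ : Measure (X₁ × X₂)).snd μ₂ :=
      (ent_lsc F₂ μ₂).comp (g := fun γ : FiniteMeasure (X₁ × X₂) => γ.map Prod.snd)
        (FiniteMeasure.continuous_map continuous_snd)
    have h3 := ID_lscOn (DK C κ) (DK_lsc C hClsc κ) (DK_conv C hCconv κ hκ) K' hK' S 4 hTT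
    have hE : LowerSemicontinuousOn E S :=
      ((h1.lowerSemicontinuousOn S).add (h2.lowerSemicontinuousOn S)).add h3
    have hE' : LowerSemicontinuousOn (fun γ => ((E γ : ℝ≥0∞) : EReal)) S :=
      continuous_coe_ennreal_ereal.comp_lowerSemicontinuousOn hE
        (fun a b h => EReal.coe_ennreal_le_coe_ennreal_iff.2 h)
    refine hE'.add' (Continuous.lowerSemicontinuous ?_ |>.lowerSemicontinuousOn S) ?_
    · refine continuous_coe_real_ereal.comp (continuous_const.mul ?_)
      exact NNReal.continuous_coe.comp FiniteMeasure.continuous_mass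
    · intro γ _
      exact EReal.continuousAt_add (Or.inr (EReal.coe_ne_bot _)) (Or.inr (EReal.coe_ne_top _))
  have hg0S : g₀ ∈ S := hSsub g₀ hc.le
  obtain ⟨γ, hγS, hmin⟩ := hlsc.exists_isMinOn ⟨g₀, hg0S⟩ hScomp
  refine ⟨(γ : Measure (X₁ × X₂)), inferInstance, ?_⟩
  refine le_antisymm ?_ (sInf_le ⟨_, _, rfl⟩)
  refine le_sInf ?_
  rintro e ⟨ν, hν, rfl⟩
  have e1 : wCost C F₁ F₂ μ₁ μ₂ ν hν = cost ⟨ν, hν⟩ := hcost ⟨ν, hν⟩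
  rw [hcost, e1]
  rcases le_total (cost ⟨ν, hν⟩) c with h | h
  · exact hmin (hSsub _ h)
  · exact (hmin hg0S).trans (hc.le.trans h)

end final

theorem stmt6
    {X₁ : Type*} [MetricSpace X₁] [PolishSpace X₁] [MeasurableSpace X₁] [BorelSpace X₁]
    {X₂ : Type*} [MetricSpace X₂] [PolishSpace X₂] [MeasurableSpace X₂] [BorelSpace X₂]
    [Nonempty X₂]
    (C : X₁ → ProbabilityMeasure X₂ → EReal)
    (hClsc : LowerSemicontinuous fun q : X₁ × ProbabilityMeasure X₂ => C q.1 q.2)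
    (hCbdd : ∃ K : ℝ, ∀ x p, (K : EReal) ≤ C x p)
    (hCconv : ∀ (x : X₁) (p q m : ProbabilityMeasure X₂) (t : ℝ), 0 ≤ t → t ≤ 1 →
      (m : Measure X₂) = ENNReal.ofReal t • (p : Measure X₂)
          + ENNReal.ofReal (1 - t) • (q : Measure X₂) →
      C x m ≤ (t : EReal) * C x p + ((1 - t : ℝ) : EReal) * C x q)
    (F₁ F₂ : EntropyFn)
    (μ₁ : Measure X₁) (μ₂ : Measure X₂) [IsFiniteMeasure μ₁] [IsFiniteMeasure μ₂]
    (hfeas : ∃ (γ : Measure (X₁ × X₂)) (hγ : IsFiniteMeasure γ),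
      wCost C F₁ F₂ μ₁ μ₂ γ hγ < ⊤)
    (hcoer : (F₁.Superlinear ∧ F₂.Superlinear) ∨
      (CompactSpace X₁ ∧ CompactSpace X₂ ∧
        (0 : EReal) < ((F₁.recC : ℝ≥0∞) : EReal) + ((F₂.recC : ℝ≥0∞) : EReal)
          + sInf { e : EReal | ∃ (x : X₁) (p : ProbabilityMeasure X₂), e = C x p })) :
    ∃ (γ : Measure (X₁ × X₂)) (hγ : IsFiniteMeasure γ),
      wCost C F₁ F₂ μ₁ μ₂ γ hγ = wOpt C F₁ F₂ μ₁ μ₂ := by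
  obtain ⟨κ₀, hκ₀⟩ := hCbdd
  rcases hcoer with ⟨hs₁, hs₂⟩ | ⟨hc₁, hc₂, hpos⟩
  · have hp : (0 : EReal) < ((F₁.recC : ℝ≥0∞) : EReal) + ((F₂.recC : ℝ≥0∞) : EReal)
        + (κ₀ : EReal) := by
      have e1 : F₁.recC = ⊤ := hs₁
      have e2 : F₂.recC = ⊤ := hs₂
      rw [e1, e2]
      simp
    obtain ⟨a₁, a₂, b₁, b₂, hg₁, hg₂, hpos⟩ := exists_coefs F₁ F₂ κ₀ hp
    refine exists_min C hClsc hCconv F₁ F₂ μ₁ μ₂ hfeas κ₀ hκ₀ a₁ a₂ b₁ b₂ hg₁ hg₂ hpos ?_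
    intro c ε hε
    obtain ⟨K, hK, h1⟩ := tight_fam F₁ hs₁ μ₁ c ε hε
    obtain ⟨K', hK', h2⟩ := tight_fam F₂ hs₂ μ₂ c ε hε
    refine ⟨K, K', hK, hK', fun γ hγ h3 h4 => ?_⟩
    haveI := hγ
    exact ⟨h1 _ inferInstance h3, h2 _ inferInstance h4⟩
  · obtain ⟨κ, hκ, hp⟩ : ∃ κ : ℝ, (∀ x p, (κ : EReal) ≤ C x p) ∧
        (0 : EReal) < ((F₁.recC : ℝ≥0∞) : EReal) + ((F₂.recC : ℝ≥0∞) : EReal)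
          + (κ : EReal) := by
      set i := sInf { e : EReal | ∃ (x : X₁) (p : ProbabilityMeasure X₂), e = C x p } with hi
      have hle : ∀ x p, i ≤ C x p := fun x p => sInf_le ⟨x, p, rfl⟩
      have hbot : i ≠ ⊥ := by
        have h : (κ₀ : EReal) ≤ i := by
          refine le_sInf ?_
          rintro e ⟨x, p, rfl⟩
          exact hκ₀ x p
        intro h'
        rw [h'] at h
        exact EReal.coe_ne_bot κ₀ (le_bot_iff.1 h)
      by_cases htop : i = ⊤
      · refine ⟨1, fun x p => ?_, ?_⟩
        · exact le_top.trans (htop ▸ hle x p)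
        · have h0 : (0 : EReal) ≤ ((F₁.recC : ℝ≥0∞) : EReal) + ((F₂.recC : ℝ≥0∞) : EReal) :=
            add_nonneg (EReal.coe_ennreal_nonneg _) (EReal.coe_ennreal_nonneg _)
          have h1 : (0 : EReal) < ((1 : ℝ) : EReal) := by exact_mod_cast zero_lt_one
          exact h1.trans_le (le_add_of_nonneg_left h0)
      · have e : ((i.toReal : ℝ) : EReal) = i := EReal.coe_toReal htop hbot
        refine ⟨i.toReal, fun x p => ?_, ?_⟩
        · rw [e]; exact hle x p
        · rw [e]; exact hpos
    obtain ⟨a₁, a₂, b₁, b₂, hg₁, hg₂, hpos'⟩ := exists_coefs F₁ F₂ κ hp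
    refine exists_min C hClsc hCconv F₁ F₂ μ₁ μ₂ hfeas κ hκ a₁ a₂ b₁ b₂ hg₁ hg₂ hpos' ?_
    intro c ε hε
    refine ⟨univ, univ, isCompact_univ, isCompact_univ, fun γ hγ h3 h4 => ?_⟩
    simp
end
end

section
/- Let X₁, X₂ be Polish metric spaces, C : X₁ × 𝒫(X₂) → (−∞,+∞] lower semi-continuous, bounded from below, with C(x₁,·) convex for every x₁, and let F₁, F₂ be admissible entropy functions. If (F₁)'_∞ + (F₂)'_∞ + inf C > 0 then the set Λ is nonempty. If moreover F₁ and F₂ are superlinear, then Λ_R is also nonempty. -/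
open MeasureTheory Filter Set Topology
open scoped ENNReal NNReal BoundedContinuousFunction

noncomputable section

lemma aux_key (F : EntropyFn) (a : ℝ) (ha : ((a : ℝ) : EReal) < ((F.recC : ℝ≥0∞) : EReal)) :
    ∃ K : ℝ, 1 ≤ K ∧ ∀ s : ℝ, 0 ≤ s → ((a * s - K : ℝ) : EReal) ≤ ((F.F s : ℝ≥0∞) : EReal) := by
  rcases le_or_gt a 0 with h0 | h0
  · refine ⟨1, le_rfl, fun s hs => ?_⟩
    have h1 : ((a * s - 1 : ℝ) : EReal) ≤ 0 := by
      rw [← EReal.coe_zero, EReal.coe_le_coe_iff]; nlinarith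
    exact h1.trans (EReal.coe_ennreal_nonneg _)
  obtain ⟨s0, hs0, hF0⟩ := F.dom
  obtain ⟨b, hb1, hb2⟩ := EReal.lt_iff_exists_real_btwn.1 ha
  have hab : a < b := EReal.coe_lt_coe_iff.1 hb1
  have hb0 : 0 < b := h0.trans hab
  have hb3 : ENNReal.ofReal b < F.recC := by
    rw [← EReal.coe_ennreal_lt_coe_ennreal_iff, EReal.coe_ennreal_ofReal, max_eq_left hb0.le]
    exact hb2
  have hfr : ∃ᶠ s in atTop, ENNReal.ofReal b < F.F s / ENNReal.ofReal s :=
    Filter.frequently_lt_of_lt_limsup (by isBoundedDefault) hb3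
  set f0 := (F.F s0).toReal with hf0
  obtain ⟨s1, hlt, hs1⟩ := (hfr.and_eventually
    (eventually_ge_atTop (max (s0 + 1) (f0 / (b - a))))).exists
  have hs10 : s0 + 1 ≤ s1 := (le_max_left _ _).trans hs1
  have hs1b : f0 ≤ s1 * (b - a) := by
    have := (le_max_right _ _).trans hs1
    rwa [div_le_iff₀ (by linarith)] at this
  have hs1p : 0 < s1 := by linarith
  have hlt' : ENNReal.ofReal (b * s1) < F.F s1 := by
    rw [ENNReal.ofReal_mul hb0.le]
    exact (ENNReal.lt_div_iff_mul_lt (by simp [hs1p]) (by simp)).1 hlt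
  refine ⟨a * s1 + 1, by nlinarith, fun s hs => ?_⟩
  by_cases hfin : F.F s = ∞
  · rw [hfin]; simp
  rw [← ENNReal.ofReal_toReal hfin, EReal.coe_ennreal_ofReal, max_eq_left ENNReal.toReal_nonneg,
    EReal.coe_le_coe_iff]
  have hFs : 0 ≤ (F.F s).toReal := ENNReal.toReal_nonneg
  rcases le_or_gt s s1 with hle | hgt
  · nlinarith
  -- convexity
  have hd : 0 < s - s0 := by linarith
  set t := (s1 - s0) / (s - s0) with ht
  have ht0 : 0 < t := div_pos (by linarith) hd
  have ht1 : t ≤ 1 := by rw [ht, div_le_one hd]; linarith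
  have htm : t * (s - s0) = s1 - s0 := by rw [ht]; field_simp
  have hc := F.convex' s hs s0 hs0.le t ht0.le ht1
  have he : t * s + (1 - t) * s0 = s1 := by linarith
  rw [he] at hc
  have hc2 := hlt'.trans_le hc
  rw [← ENNReal.ofReal_toReal hfin, ← ENNReal.ofReal_toReal hF0,
    ← ENNReal.ofReal_mul ht0.le, ← ENNReal.ofReal_mul (by linarith),
    ← ENNReal.ofReal_add (by positivity)
      (mul_nonneg (by linarith) ENNReal.toReal_nonneg)] at hc2
  have hc3 := (ENNReal.ofReal_lt_ofReal_iff_of_nonneg (by positivity)).1 hc2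
  rw [← hf0] at hc3
  have hf00 : 0 ≤ f0 := ENNReal.toReal_nonneg
  -- b s1 < t Fs + (1-t) f0, f0 ≤ s1 (b-a)
  have h5 : a * s1 < t * (F.F s).toReal := by nlinarith
  have h6 : t * s ≤ s1 := by nlinarith
  have h7 : t * (a * s) < t * (F.F s).toReal := by nlinarith
  have h8 := lt_of_mul_lt_mul_left h7 ht0.le
  nlinarith

lemma aux_int (F : EntropyFn) (a : ℝ) (ha : ((a : ℝ) : EReal) < ((F.recC : ℝ≥0∞) : EReal)) :
    -a ∈ interior F.circDom := by
  obtain ⟨b, hb1, hb2⟩ := EReal.lt_iff_exists_real_btwn.1 ha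
  have hab : a < b := EReal.coe_lt_coe_iff.1 hb1
  obtain ⟨K, -, hK⟩ := aux_key F b hb2
  refine mem_interior.2 ⟨Ioi (-b), fun φ hφ => ?_, isOpen_Ioi, by simpa using hab⟩
  have hφ' : -b < φ := hφ
  have : ((-K : ℝ) : EReal) ≤ F.circ φ := by
    refine le_iInf fun s => ?_
    have hs : 0 ≤ (s : ℝ) := s.2
    calc ((-K : ℝ) : EReal) ≤ ((φ * s + (b * s - K) : ℝ) : EReal) := by
          rw [EReal.coe_le_coe_iff]; nlinarith
      _ = (φ : EReal) * ((s : ℝ) : EReal) + ((b * s - K : ℝ) : EReal) := by push_cast; rfl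
      _ ≤ _ := add_le_add le_rfl (hK s hs)
  intro h
  rw [h] at this
  simp at this

lemma aux_rev (F : EntropyFn) (hF : F.Superlinear) (a : ℝ) :
    ∃ ψ : ℝ, ψ ≤ -1 ∧ F.revConj ψ ≤ ((-a : ℝ) : EReal) := by
  have hF' : F.recC = ∞ := hF
  obtain ⟨K, hK1, hK⟩ := aux_key F a (by rw [hF']; simp)
  refine ⟨-K, by linarith, iSup_le fun s => ?_⟩
  rcases (show (0:ℝ) ≤ s from s.2).eq_or_lt with h | h
  · rw [← h]; simp [EntropyFn.revF, hF']
  have h1 := hK (1 / s) (by positivity)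
  simp only [EntropyFn.revF, h, if_true]
  by_cases hfin : F.F (1 / s) = ∞
  · rw [hfin, ENNReal.mul_top (by simp [h])]; simp
  rw [← ENNReal.ofReal_toReal hfin, EReal.coe_ennreal_ofReal, max_eq_left ENNReal.toReal_nonneg,
    EReal.coe_le_coe_iff] at h1
  rw [← ENNReal.ofReal_toReal hfin, ← ENNReal.ofReal_mul h.le, EReal.coe_ennreal_ofReal,
    max_eq_left (by positivity), ← EReal.coe_sub, EReal.coe_le_coe_iff]
  have h2 := mul_le_mul_of_nonneg_left h1 h.le
  have h3 : (s:ℝ) * (a * (1 / s) - K) = a - s * K := by field_simp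
  linarith

lemma aux_eInt {α : Type*} [MeasurableSpace α] (μ : Measure α) [IsProbabilityMeasure μ]
    (c : EReal) : eIntegral μ (fun _ => c) = c := by
  induction c with
  | bot => simp [eIntegral, posE]
  | top => simp [eIntegral, posE]
  | coe r =>
    have h : -(r : EReal) ≠ ⊤ := by rw [← EReal.coe_neg]; exact EReal.coe_ne_top _
    simp only [eIntegral, posE, lintegral_const, measure_univ, mul_one, EReal.coe_ne_top, h,
      if_false, EReal.toReal_neg_eq, EReal.toReal_coe, EReal.coe_ennreal_ofReal,
      ← EReal.coe_sub, EReal.coe_eq_coe_iff]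
    rcases le_total r 0 with h | h <;> simp [h]

lemma aux_split (r₁ r₂ : ℝ≥0∞) (m : ℝ) (h : ((-m : ℝ) : EReal) < (r₁ : EReal) + (r₂ : EReal)) :
    ∃ a₁ a₂ : ℝ, (a₁ : EReal) < (r₁ : EReal) ∧ (a₂ : EReal) < (r₂ : EReal) ∧ -a₁ + -a₂ ≤ m := by
  have hneg : ∀ r : ℝ≥0∞, ((-1 : ℝ) : EReal) < (r : EReal) := fun r =>
    lt_of_lt_of_le (by rw [← EReal.coe_zero, EReal.coe_lt_coe_iff]; norm_num)
      (EReal.coe_ennreal_nonneg r)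
  by_cases h1 : r₁ = ∞
  · exact ⟨1 - m, -1, by rw [h1]; exact EReal.coe_lt_top _, hneg _, by linarith⟩
  by_cases h2 : r₂ = ∞
  · exact ⟨-1, 1 - m, hneg _, by rw [h2]; exact EReal.coe_lt_top _, by linarith⟩
  lift r₁ to ℝ≥0 using h1
  lift r₂ to ℝ≥0 using h2
  have e1 : ∀ r : ℝ≥0, ((r : ℝ≥0∞) : EReal) = ((r : ℝ) : EReal) := fun r => rfl
  rw [e1, e1, ← EReal.coe_add, EReal.coe_lt_coe_iff] at h
  refine ⟨r₁ - (r₁ + r₂ + m) / 2, r₂ - (r₁ + r₂ + m) / 2, ?_, ?_, ?_⟩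
  · rw [e1, EReal.coe_lt_coe_iff]; linarith
  · rw [e1, EReal.coe_lt_coe_iff]; linarith
  · linarith

lemma aux_m (A I : EReal) (hA : 0 ≤ A) (K : ℝ) (hI : (K : EReal) ≤ I) (h : 0 < A + I) :
    ∃ m : ℝ, (m : EReal) ≤ I ∧ ((-m : ℝ) : EReal) < A := by
  induction I with
  | bot => simp at hI
  | top =>
    refine ⟨1, le_top, lt_of_lt_of_le ?_ hA⟩
    rw [← EReal.coe_zero, EReal.coe_lt_coe_iff]; norm_num
  | coe r =>
    refine ⟨r, le_rfl, ?_⟩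
    induction A with
    | bot => simp at hA
    | top => exact EReal.coe_lt_top _
    | coe s =>
      rw [← EReal.coe_add, ← EReal.coe_zero, EReal.coe_lt_coe_iff] at h
      rw [EReal.coe_lt_coe_iff]; linarith

theorem stmt7
    {X₁ : Type*} [MetricSpace X₁] [PolishSpace X₁] [MeasurableSpace X₁] [BorelSpace X₁]
    {X₂ : Type*} [MetricSpace X₂] [PolishSpace X₂] [MeasurableSpace X₂] [BorelSpace X₂]
    [Nonempty X₂]
    (C : X₁ → ProbabilityMeasure X₂ → EReal)
    (hClsc : LowerSemicontinuous fun q : X₁ × ProbabilityMeasure X₂ => C q.1 q.2)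
    (hCbdd : ∃ K : ℝ, ∀ x p, (K : EReal) ≤ C x p)
    (hCconv : ∀ (x : X₁) (p q m : ProbabilityMeasure X₂) (t : ℝ), 0 ≤ t → t ≤ 1 →
      (m : Measure X₂) = ENNReal.ofReal t • (p : Measure X₂)
          + ENNReal.ofReal (1 - t) • (q : Measure X₂) →
      C x m ≤ (t : EReal) * C x p + ((1 - t : ℝ) : EReal) * C x q)
    (F₁ F₂ : EntropyFn)
    (hcoer : (0 : EReal) < ((F₁.recC : ℝ≥0∞) : EReal) + ((F₂.recC : ℝ≥0∞) : EReal)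
        + sInf { e : EReal | ∃ (x : X₁) (p : ProbabilityMeasure X₂), e = C x p }) :
    (lamSet C F₁ F₂).Nonempty ∧
      (F₁.Superlinear → F₂.Superlinear → (lamRSet C F₁ F₂).Nonempty) := by
  obtain ⟨K, hK⟩ := hCbdd
  obtain ⟨m, hm, hm2⟩ := aux_m _ _
    (add_nonneg (EReal.coe_ennreal_nonneg _) (EReal.coe_ennreal_nonneg _)) K
    (le_sInf (by rintro e ⟨x, p, rfl⟩; exact hK x p)) hcoer
  have hmC : ∀ x p, (m : EReal) ≤ C x p := fun x p => hm.trans (sInf_le ⟨x, p, rfl⟩)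
  obtain ⟨a₁, a₂, h1, h2, h12⟩ := aux_split _ _ m hm2
  refine ⟨⟨(BoundedContinuousFunction.const _ (-a₁), BoundedContinuousFunction.const _ (-a₂)),
    fun _ => aux_int F₁ a₁ h1, fun _ => aux_int F₂ a₂ h2, fun x p => ?_⟩, fun hs1 hs2 => ?_⟩
  · refine le_trans ?_ (hmC x p)
    rw [EReal.coe_le_coe_iff]
    simpa using h12
  · obtain ⟨ψ₁, hψ1, hr1⟩ := aux_rev F₁ hs1 a₁
    obtain ⟨ψ₂, hψ2, hr2⟩ := aux_rev F₂ hs2 a₂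
    have hneg : ∀ r : ℝ≥0∞, ((-1 : ℝ) : EReal) < (r : EReal) := fun r =>
      lt_of_lt_of_le (by rw [← EReal.coe_zero, EReal.coe_lt_coe_iff]; norm_num)
        (EReal.coe_ennreal_nonneg r)
    refine ⟨(BoundedContinuousFunction.const _ ψ₁, BoundedContinuousFunction.const _ ψ₂),
      ⟨-1, hneg _, fun _ => hψ1⟩, ⟨-1, hneg _, fun _ => hψ2⟩, fun x p => ?_⟩
    refine le_trans ?_ (hmC x p)
    simp only [BoundedContinuousFunction.const_apply, aux_eInt]
    refine (add_le_add hr1 hr2).trans ?_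
    rw [← EReal.coe_add, EReal.coe_le_coe_iff]
    exact h12
end
end

section
/- Let X₁, X₂ be Polish metric spaces, C : X₁ × 𝒫(X₂) → (−∞,+∞] lower semi-continuous, bounded from below, with C(x₁,·) convex for every x₁, F₁, F₂ admissible entropy functions with (F₁)'_∞ + (F₂)'_∞ + inf C > 0. Then for every μ₁ ∈ ℳ(X₁), μ₂ ∈ ℳ(X₂): ℰ_C(μ₁,μ₂) ≥ sup_{(φ₁,φ₂)∈Λ} Σ_{i=1}^2 ∫_{X_i} F_i°(φ_i) dμ_i; in particular the functional γ ↦ ℰ_C(γ|μ₁,μ₂) is bounded from below on ℳ(X₁×X₂). -/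
open MeasureTheory Filter Set Topology
open scoped ENNReal NNReal BoundedContinuousFunction

noncomputable section

lemma s8_posE_coe (r : ℝ) : posE (r : EReal) = ENNReal.ofReal r := by
  simp [posE]

lemma s8_posE_mono {a b : EReal} (h : a ≤ b) : posE a ≤ posE b := by
  induction b with
  | top => simp [posE]
  | bot => simp at h; simp [h]
  | coe b =>
    induction a with
    | top => simp at h
    | bot => simp [posE]
    | coe a =>
      rw [s8_posE_coe, s8_posE_coe]
      exact ENNReal.ofReal_le_ofReal (by exact_mod_cast h)

lemma s8_eIntegral_mono {α : Type*} [MeasurableSpace α] {μ : Measure α} {f g : α → EReal}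
    (h : ∀ᵐ x ∂μ, f x ≤ g x) : eIntegral μ f ≤ eIntegral μ g := by
  unfold eIntegral
  apply EReal.sub_le_sub
  · rw [EReal.coe_ennreal_le_coe_ennreal_iff]
    exact lintegral_mono_ae (h.mono fun x hx => s8_posE_mono hx)
  · rw [EReal.coe_ennreal_le_coe_ennreal_iff]
    exact lintegral_mono_ae (h.mono fun x hx => s8_posE_mono (EReal.neg_le_neg_iff.2 hx))

lemma s8_coe_toReal {a : ℝ≥0∞} (h : a ≠ ∞) : ((a : ℝ≥0∞) : EReal) = ((a.toReal : ℝ) : EReal) := by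
  lift a to ℝ≥0 using h
  rfl

lemma s8_eIntegral_real {α : Type*} [MeasurableSpace α] {μ : Measure α} {h : α → ℝ}
    (hh : Integrable h μ) : eIntegral μ (fun x => (h x : EReal)) = ((∫ x, h x ∂μ : ℝ) : EReal) := by
  have h1 : (∫⁻ x, ENNReal.ofReal (h x) ∂μ) ≠ ∞ := hh.lintegral_lt_top.ne
  have h2 : (∫⁻ x, ENNReal.ofReal (-(h x)) ∂μ) ≠ ∞ := hh.neg.lintegral_lt_top.ne
  rw [integral_eq_lintegral_pos_part_sub_lintegral_neg_part hh, EReal.coe_sub,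
    ← s8_coe_toReal h1, ← s8_coe_toReal h2]
  unfold eIntegral
  simp only [s8_posE_coe, ← EReal.coe_neg]

lemma s8_meas (F : EntropyFn) : Measurable (fun s : ℝ≥0∞ => F.F s.toReal) := by
  have h1 : LowerSemicontinuous (fun s : ℝ => F.F (max s 0)) := by
    intro s y hy
    have h0 := F.lsc (max s 0) (le_max_right s 0) y hy
    have hc : Tendsto (fun s : ℝ => max s 0) (𝓝 s) (𝓝[Ici 0] (max s 0)) :=
      tendsto_nhdsWithin_iff.2 ⟨(by fun_prop : Continuous fun s : ℝ => max s 0).tendsto s,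
        Eventually.of_forall fun x => mem_Ici.2 (le_max_right _ _)⟩
    exact hc.eventually h0
  have h2 := h1.measurable.comp ENNReal.measurable_toReal
  convert h2 using 2 with s
  simp [Function.comp]

/-- If the conjugate is finite at `φ` then `-φ ≤ recC`. -/
lemma s8_rec (F : EntropyFn) (φ : ℝ) (h : F.circ (φ : EReal) ≠ ⊥) :
    ENNReal.ofReal (-φ) ≤ F.recC := by
  obtain ⟨a, ha⟩ : ∃ a : ℝ, ∀ s : ℝ, 0 ≤ s →
      (a : EReal) ≤ ((φ * s : ℝ) : EReal) + ((F.F s : ℝ≥0∞) : EReal) := by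
    obtain ⟨a, -, ha⟩ := EReal.lt_iff_exists_real_btwn.1 (bot_lt_iff_ne_bot.2 h)
    refine ⟨a, fun s hs => ?_⟩
    have := ha.le.trans (iInf_le _ (⟨s, hs⟩ : Ici (0:ℝ)))
    simpa [EReal.coe_mul] using this
  have key : ∀ s : ℝ, 0 < s → ENNReal.ofReal (-φ + a / s) ≤ F.F s / ENNReal.ofReal s := by
    intro s hs
    by_cases hF : F.F s = ∞
    · rw [hF, ENNReal.top_div_of_ne_top ENNReal.ofReal_ne_top]; exact le_top
    · have h1 := ha s hs.le
      rw [s8_coe_toReal hF, ← EReal.coe_add, EReal.coe_le_coe_iff] at h1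
      rw [← ENNReal.ofReal_toReal hF, ← ENNReal.ofReal_div_of_pos hs]
      apply ENNReal.ofReal_le_ofReal
      rw [le_div_iff₀ hs]
      field_simp
      linarith
  have hlim : Tendsto (fun s : ℝ => ENNReal.ofReal (-φ + a / s)) atTop (𝓝 (ENNReal.ofReal (-φ))) := by
    apply ENNReal.tendsto_ofReal
    simpa using (tendsto_const_nhds (x := -φ)).add (tendsto_const_nhds (x := a).div_atTop tendsto_id)
  rw [← hlim.limsup_eq]
  unfold EntropyFn.recC recessionOf
  refine Filter.limsup_le_limsup ?_
  filter_upwards [eventually_gt_atTop 0] with s hs using key s hs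

/-- Below the recession constant, an affine minorant. -/
lemma s8_minor (F : EntropyFn) (a : ℝ) (h : (a : EReal) < ((F.recC : ℝ≥0∞) : EReal)) :
    ∃ A : ℝ, ∀ s : ℝ, 0 ≤ s → ((a * s - A : ℝ) : EReal) ≤ ((F.F s : ℝ≥0∞) : EReal) := by
  rcases le_or_gt a 0 with ha | ha
  · refine ⟨0, fun s hs => ?_⟩
    have : a * s - 0 ≤ 0 := by nlinarith
    exact (EReal.coe_le_coe_iff.2 this).trans (EReal.coe_ennreal_nonneg _)
  obtain ⟨a', haa', ha'⟩ := EReal.lt_iff_exists_real_btwn.1 h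
  have haa : a < a' := by exact_mod_cast haa'
  have h2 : ENNReal.ofReal a' < F.recC := by
    rw [← EReal.coe_ennreal_lt_coe_ennreal_iff, EReal.coe_ennreal_ofReal, max_eq_left (by linarith)]
    exact ha'
  obtain ⟨s0, hs0, hF0⟩ := F.dom
  have hfr : ∃ᶠ s : ℝ in atTop, ENNReal.ofReal a' < F.F s / ENNReal.ofReal s :=
    Filter.frequently_lt_of_lt_limsup (by isBoundedDefault) h2
  obtain ⟨s1, hs1, hs1a, hs1b⟩ := (hfr.and_eventually ((eventually_gt_atTop s0).and
    (eventually_ge_atTop ((F.F s0).toReal / (a' - a))))).exists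
  have hs1p : 0 < s1 := hs0.trans hs1a
  have hF1 : ENNReal.ofReal (a' * s1) ≤ F.F s1 := by
    rw [ENNReal.ofReal_mul (by linarith)]
    rw [ENNReal.lt_div_iff_mul_lt (by simp [hs1p]) (by simp)] at hs1
    exact hs1.le
  have hb : (F.F s0).toReal ≤ (a' - a) * s1 := by
    rw [div_le_iff₀ (by linarith)] at hs1b
    linarith
  refine ⟨a * s1, fun s hs => ?_⟩
  rcases le_or_gt s s1 with hle | hgt
  · have : a * s - a * s1 ≤ 0 := by nlinarith
    exact (EReal.coe_le_coe_iff.2 this).trans (EReal.coe_ennreal_nonneg _)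
  by_cases hFs : F.F s = ∞
  · rw [hFs]; simp
  have hd : 0 < s - s0 := by linarith
  set t := (s - s1) / (s - s0) with ht
  have ht0 : 0 ≤ t := div_nonneg (by linarith) hd.le
  have ht1 : t ≤ 1 := by rw [ht, div_le_one hd]; linarith
  have htd : t * (s - s0) = s - s1 := by rw [ht]; field_simp
  have hc := F.convex' s0 hs0.le s hs t ht0 ht1
  have he : t * s0 + (1 - t) * s = s1 := by linarith
  rw [he] at hc
  have hc2 := hF1.trans hc
  rw [← ENNReal.ofReal_toReal hF0, ← ENNReal.ofReal_toReal hFs, ← ENNReal.ofReal_mul ht0,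
    ← ENNReal.ofReal_mul (by linarith), ← ENNReal.ofReal_add (by positivity)
      (mul_nonneg (by linarith) (by positivity)),
    ENNReal.ofReal_le_ofReal_iff (add_nonneg (by positivity)
      (mul_nonneg (by linarith) (by positivity)))] at hc2
  rw [s8_coe_toReal hFs, EReal.coe_le_coe_iff]
  set f0 := (F.F s0).toReal
  set f := (F.F s).toReal
  have hf0 : 0 ≤ f0 := ENNReal.toReal_nonneg
  have h1t : 0 < 1 - t := by
    have : t < 1 := by rw [ht, div_lt_one hd]; linarith
    linarith
  -- a s1 + f0 ≤ t f0 + (1-t) f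
  have h5 : a * s1 + f0 ≤ t * f0 + (1 - t) * f := by linarith
  have h6 : (1 - t) * (a * s - a * s0 + f0) ≤ (1 - t) * f := by
    have : (1 - t) * (s - s0) = s1 - s0 := by linarith
    nlinarith
  have h7 := le_of_mul_le_mul_left h6 h1t
  nlinarith

lemma s8_circ_of_minor (F : EntropyFn) (a A : ℝ)
    (h : ∀ s : ℝ, 0 ≤ s → ((a * s - A : ℝ) : EReal) ≤ ((F.F s : ℝ≥0∞) : EReal)) :
    ((-A : ℝ) : EReal) ≤ F.circ ((-a : ℝ) : EReal) := by
  refine le_iInf fun s => ?_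
  have := add_le_add_right (h s s.2) ((-a * s : ℝ) : EReal)
  rw [← EReal.coe_add] at this
  rw [← EReal.coe_mul]
  refine le_trans (EReal.coe_le_coe_iff.2 ?_) this
  linarith

lemma s8_ent {X : Type*} [TopologicalSpace X] [MeasurableSpace X] [BorelSpace X]
    (F : EntropyFn) (γ μ : Measure X) [IsFiniteMeasure γ] [IsFiniteMeasure μ]
    (φ : X →ᵇ ℝ) (hφ : ∀ x, φ x ∈ F.circDom) :
    eIntegral μ (fun x => F.circ (φ x)) ≤
      ((entF F γ μ : ℝ≥0∞) : EReal) + ((∫ x, φ x ∂γ : ℝ) : EReal) := by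
  by_cases htop : entF F γ μ = ∞
  · rw [htop]; simp
  set f := γ.rnDeriv μ with hf
  set σ := γ.singularPart μ with hσ
  have hfin1 : (∫⁻ x, F.F ((f x).toReal) ∂μ) ≠ ∞ := fun h => htop (by simp [entF, ← hf, h])
  have hfin2 : F.recC * σ Set.univ ≠ ∞ := fun h => htop (by simp [entF, ← hσ, h])
  have hmeas : Measurable fun x => F.F ((f x).toReal) :=
    (s8_meas F).comp (Measure.measurable_rnDeriv γ μ)
  have hint1 : Integrable (fun x => (F.F ((f x).toReal)).toReal) μ :=
    integrable_toReal_of_lintegral_ne_top hmeas.aemeasurable hfin1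
  have hφγ : ∀ ν : Measure X, IsFiniteMeasure ν → Integrable φ ν := fun ν _ => φ.integrable ν
  have hint2 : Integrable (fun x => (f x).toReal * φ x) μ := by
    have h1 : Integrable (fun x => (f x).toReal) μ := Measure.integrable_toReal_rnDeriv
    refine h1.mul_bdd (c := ‖φ‖) φ.continuous.measurable.aestronglyMeasurable
      (Eventually.of_forall fun x => φ.norm_coe_le_norm x)
  have hae : ∀ᵐ x ∂μ, F.F ((f x).toReal) < ∞ := ae_lt_top hmeas hfin1
  have hle : eIntegral μ (fun x => F.circ (φ x)) ≤
      eIntegral μ (fun x => (((f x).toReal * φ x + (F.F ((f x).toReal)).toReal : ℝ) : EReal)) := by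
    apply s8_eIntegral_mono
    filter_upwards [hae] with x hx
    refine (iInf_le _ (⟨(f x).toReal, ENNReal.toReal_nonneg⟩ : Ici (0:ℝ))).trans ?_
    rw [EReal.coe_add, ← s8_coe_toReal hx.ne, mul_comm (f x).toReal, EReal.coe_mul]
  refine hle.trans ?_
  rw [s8_eIntegral_real (h := fun x => (f x).toReal * φ x + (F.F ((f x).toReal)).toReal)
    (hint2.add hint1), s8_coe_toReal htop, ← EReal.coe_add,
    EReal.coe_le_coe_iff, integral_add hint2 hint1]
  have hdec : ∫ x, φ x ∂γ = ∫ x, φ x ∂σ + ∫ x, (f x).toReal * φ x ∂μ := by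
    conv_lhs => rw [← Measure.singularPart_add_rnDeriv γ μ]
    rw [integral_add_measure (hφγ _ inferInstance) (hφγ _ inferInstance)]
    congr 1
    rw [integral_withDensity_eq_integral_toReal_smul (Measure.measurable_rnDeriv γ μ)
      (Measure.rnDeriv_lt_top γ μ)]
    simp [hf]
  have hE : (entF F γ μ).toReal = (∫ x, (F.F ((f x).toReal)).toReal ∂μ)
      + (F.recC * σ Set.univ).toReal := by
    rw [integral_toReal hmeas.aemeasurable hae]
    exact ENNReal.toReal_add hfin1 hfin2
  have hS : -(F.recC * σ Set.univ).toReal ≤ ∫ x, φ x ∂σ := by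
    by_cases h0 : σ Set.univ = 0
    · rw [Measure.measure_univ_eq_zero] at h0
      simp [h0]
    · have hrec : F.recC ≠ ∞ := fun h => hfin2 (by rw [h, ENNReal.top_mul h0])
      have hb : ∀ x, -F.recC.toReal ≤ φ x := by
        intro x
        have h1 := s8_rec F (φ x) (hφ x)
        rw [ENNReal.ofReal_le_iff_le_toReal hrec] at h1
        linarith
      have := integral_mono (μ := σ) (integrable_const _) (hφγ σ inferInstance) hb
      simp only [integral_const, smul_eq_mul] at this
      rw [ENNReal.toReal_mul]
      simp only [Measure.real] at this
      linarith
  rw [hdec, hE]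
  linarith

lemma s8_weak
    {X₁ : Type*} [MetricSpace X₁] [PolishSpace X₁] [MeasurableSpace X₁] [BorelSpace X₁]
    {X₂ : Type*} [MetricSpace X₂] [PolishSpace X₂] [MeasurableSpace X₂] [BorelSpace X₂]
    [Nonempty X₂]
    (C : X₁ → ProbabilityMeasure X₂ → EReal) (F₁ F₂ : EntropyFn)
    (μ₁ : Measure X₁) (μ₂ : Measure X₂) [IsFiniteMeasure μ₁] [IsFiniteMeasure μ₂]
    (φ₁ : X₁ →ᵇ ℝ) (φ₂ : X₂ →ᵇ ℝ)
    (h₁ : ∀ x, φ₁ x ∈ F₁.circDom) (h₂ : ∀ x, φ₂ x ∈ F₂.circDom)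
    (hC : ∀ (x₁ : X₁) (p : ProbabilityMeasure X₂),
        ((φ₁ x₁ + ∫ x₂, φ₂ x₂ ∂(p : Measure X₂) : ℝ) : EReal) ≤ C x₁ p)
    (γ : Measure (X₁ × X₂)) (hγ : IsFiniteMeasure γ) :
    eIntegral μ₁ (fun x => F₁.circ (φ₁ x)) + eIntegral μ₂ (fun x => F₂.circ (φ₂ x)) ≤
      wCost C F₁ F₂ μ₁ μ₂ γ hγ := by
  have e1 := s8_ent F₁ γ.fst μ₁ φ₁ h₁
  have e2 := s8_ent F₂ γ.snd μ₂ φ₂ h₂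
  have hi2 : Integrable (fun q : X₁ × X₂ => φ₂ q.2) (γ.fst.compProd γ.condKernel) := by
    rw [γ.disintegrate γ.condKernel]
    refine Integrable.of_bound (φ₂.continuous.measurable.comp measurable_snd).aestronglyMeasurable
      ‖φ₂‖ (Eventually.of_forall fun q => φ₂.norm_coe_le_norm q.2)
  have hi3 : Integrable (fun x => ∫ y, φ₂ y ∂(γ.condKernel x)) γ.fst := by
    refine Integrable.of_bound ?_ ‖φ₂‖ (Eventually.of_forall fun x => ?_)
    · exact (φ₂.continuous.measurable.stronglyMeasurable.integral_kernel (κ := γ.condKernel)).aestronglyMeasurable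
    · simpa using norm_integral_le_of_norm_le_const (μ := γ.condKernel x)
        (Eventually.of_forall fun y => φ₂.norm_coe_le_norm y)
  have hs : ∫ y, φ₂ y ∂γ.snd = ∫ x, ∫ y, φ₂ y ∂(γ.condKernel x) ∂γ.fst := by
    rw [← Measure.integral_compProd hi2, γ.disintegrate γ.condKernel, Measure.snd,
      integral_map measurable_snd.aemeasurable φ₂.continuous.measurable.aestronglyMeasurable]
  have e3 : (((∫ x, φ₁ x ∂γ.fst) + ∫ y, φ₂ y ∂γ.snd : ℝ) : EReal) ≤
      eIntegral γ.fst (fun x₁ => C x₁ ⟨γ.condKernel x₁, inferInstance⟩) := by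
    rw [hs, ← integral_add (φ₁.integrable _) hi3,
      ← s8_eIntegral_real (h := fun x => φ₁ x + ∫ y, φ₂ y ∂(γ.condKernel x))
        ((φ₁.integrable _).add hi3)]
    apply s8_eIntegral_mono
    exact Eventually.of_forall fun x => hC x ⟨γ.condKernel x, inferInstance⟩
  unfold wCost
  refine (add_le_add e1 e2).trans ?_
  rw [add_add_add_comm, ← EReal.coe_add]
  exact add_le_add le_rfl e3

lemma s8_choose (r₁ r₂ : ℝ≥0∞) (m : EReal)
    (h : (0 : EReal) < (r₁ : EReal) + (r₂ : EReal) + m) :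
    ∃ a b : ℝ, (a : EReal) < (r₁ : EReal) ∧ (b : EReal) < (r₂ : EReal) ∧
      ((-a + -b : ℝ) : EReal) ≤ m := by
  have hneg : ∀ r : ℝ≥0∞, ((-1 : ℝ) : EReal) < (r : EReal) := fun r =>
    lt_of_lt_of_le (by exact_mod_cast (by norm_num : (-1:ℝ) < 0)) (EReal.coe_ennreal_nonneg r)
  induction m with
  | bot => simp at h
  | top => exact ⟨-1, -1, hneg _, hneg _, le_top⟩
  | coe m =>
    by_cases h1 : r₁ = ∞
    · refine ⟨-m + 1, -1, ?_, hneg _, ?_⟩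
      · rw [h1]; exact EReal.coe_lt_top _
      · rw [EReal.coe_le_coe_iff]; linarith
    by_cases h2 : r₂ = ∞
    · refine ⟨-1, -m + 1, hneg _, ?_, ?_⟩
      · rw [h2]; exact EReal.coe_lt_top _
      · rw [EReal.coe_le_coe_iff]; linarith
    rw [s8_coe_toReal h1, s8_coe_toReal h2] at *
    have h' : 0 < r₁.toReal + r₂.toReal + m := by exact_mod_cast h
    set ε := r₁.toReal + r₂.toReal + m
    refine ⟨r₁.toReal - ε / 2, r₂.toReal - ε / 2, ?_, ?_, ?_⟩
    · rw [EReal.coe_lt_coe_iff]; linarith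
    · rw [EReal.coe_lt_coe_iff]; linarith
    · rw [EReal.coe_le_coe_iff]; simp only [ε]; linarith


theorem stmt8
    {X₁ : Type*} [MetricSpace X₁] [PolishSpace X₁] [MeasurableSpace X₁] [BorelSpace X₁]
    {X₂ : Type*} [MetricSpace X₂] [PolishSpace X₂] [MeasurableSpace X₂] [BorelSpace X₂]
    [Nonempty X₂]
    (C : X₁ → ProbabilityMeasure X₂ → EReal)
    (hClsc : LowerSemicontinuous fun q : X₁ × ProbabilityMeasure X₂ => C q.1 q.2)
    (hCbdd : ∃ K : ℝ, ∀ x p, (K : EReal) ≤ C x p)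
    (hCconv : ∀ (x : X₁) (p q m : ProbabilityMeasure X₂) (t : ℝ), 0 ≤ t → t ≤ 1 →
      (m : Measure X₂) = ENNReal.ofReal t • (p : Measure X₂)
          + ENNReal.ofReal (1 - t) • (q : Measure X₂) →
      C x m ≤ (t : EReal) * C x p + ((1 - t : ℝ) : EReal) * C x q)
    (F₁ F₂ : EntropyFn)
    (hcoer : (0 : EReal) < ((F₁.recC : ℝ≥0∞) : EReal) + ((F₂.recC : ℝ≥0∞) : EReal)
        + sInf { e : EReal | ∃ (x : X₁) (p : ProbabilityMeasure X₂), e = C x p })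
    (μ₁ : Measure X₁) (μ₂ : Measure X₂) [IsFiniteMeasure μ₁] [IsFiniteMeasure μ₂] :
    sSup { e : EReal | ∃ φ ∈ lamSet C F₁ F₂,
        e = eIntegral μ₁ (fun x => F₁.circ (φ.1 x)) +
            eIntegral μ₂ (fun x => F₂.circ (φ.2 x)) } ≤ wOpt C F₁ F₂ μ₁ μ₂ ∧
    ∃ K : ℝ, ∀ (γ : Measure (X₁ × X₂)) (hγ : IsFiniteMeasure γ),
      (K : EReal) ≤ wCost C F₁ F₂ μ₁ μ₂ γ hγ := by
  refine ⟨?_, ?_⟩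
  · refine sSup_le ?_
    rintro e ⟨φ, ⟨h1, h2, h3⟩, rfl⟩
    refine le_sInf ?_
    rintro e ⟨γ, hγ, rfl⟩
    exact s8_weak C F₁ F₂ μ₁ μ₂ φ.1 φ.2 (fun x => interior_subset (h1 x))
      (fun x => interior_subset (h2 x)) h3 γ hγ
  · obtain ⟨a, b, ha, hb, hab⟩ := s8_choose _ _ _ hcoer
    obtain ⟨A, hA⟩ := s8_minor F₁ a ha
    obtain ⟨B, hB⟩ := s8_minor F₂ b hb
    have cA := s8_circ_of_minor F₁ a A hA
    have cB := s8_circ_of_minor F₂ b B hB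
    refine ⟨(∫ _x, -A ∂μ₁) + ∫ _x, -B ∂μ₂, fun γ hγ => ?_⟩
    have hw := s8_weak C F₁ F₂ μ₁ μ₂ (BoundedContinuousFunction.const X₁ (-a))
      (BoundedContinuousFunction.const X₂ (-b))
      (fun x => (lt_of_lt_of_le (EReal.bot_lt_coe _) cA).ne')
      (fun x => (lt_of_lt_of_le (EReal.bot_lt_coe _) cB).ne')
      (fun x p => by
        have : ((-a + -b : ℝ) : EReal) ≤ C x p := hab.trans (sInf_le ⟨x, p, rfl⟩)
        simpa using this) γ hγ
    refine le_trans ?_ hw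
    rw [EReal.coe_add, ← s8_eIntegral_real (integrable_const _),
      ← s8_eIntegral_real (integrable_const _)]
    exact add_le_add (s8_eIntegral_mono (Eventually.of_forall fun _ => cA))
      (s8_eIntegral_mono (Eventually.of_forall fun _ => cB))
end
end
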